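/- arXiv:2509.12986 — 3 statements merged into one kernel-verified Lean document; each statement's English description precedes it below -/
import Mathlib

section
/- (Main theorem: existence of quantum tamper detection codes against CPTP adversaries.) Let α, δ, γ be real constants with 0 ≤ 2α < δ < 1 and γ·(δ/2 − α) > 2. Then there exists k₀ ∈ ℕ such that for every integer k ≥ k₀ for which n := γ·k is an integer, setting d := 2^n, the following holds: for every finite family F of CPTP maps on M_d(ℂ), each Φ ∈ F given with a Kraus representation having at most d^{1−δ} Kraus operators, such that |F| ≤ 2^{d^α} and F_e(Φ) ≤ 2·d^{−δ/2} for every Φ ∈ F, there exists a unitary U ∈ U(d) such that for every s ∈ {0,1}^k and every Φ ∈ F, ∑_{t∈{0,1}^k} ⟨ψ_t, Φ(|ψ_s⟩⟨ψ_s|) ψ_t⟩ ≤ 2^{−k}, where ψ_m := U(e_m ⊗ e_0). In other words, the Haar-random scheme with this U is 2^{−k}-tamper secure against F. -/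
open Matrix

noncomputable section

/-- The index set of `ℂ^d ≅ ℂ^{2^k} ⊗ ℂ^{2^{n-k}}`, `d = 2^n`. -/
abbrev CodeIdx (k m : ℕ) := Fin (2 ^ k) × Fin (2 ^ m)

/-- The first standard basis index of the ancilla register `ℂ^{2^m}`. -/
def anc0 (m : ℕ) : Fin (2 ^ m) := ⟨0, Nat.two_pow_pos m⟩

/-- The sign `±1` encoded by a Boolean. -/
def boolSign (b : Bool) : ℝ := if b then 1 else -1

lemma boolSign_mul_self (b : Bool) : boolSign b * boolSign b = 1 := by
  cases b <;> simp [boolSign]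

/-- The value at a sign vector of the real quadratic form with matrix `A`. -/
def signForm {m : ℕ} (A : Fin m → Fin m → ℝ) (ε : Fin m → Bool) : ℝ :=
  ∑ x, ∑ y, A x y * (boolSign (ε x) * boolSign (ε y))

lemma sq_sum_quadratic_le {m : ℕ} (A : Fin m → Fin m → ℝ) (v : Fin m → ℝ) :
    (∑ x, ∑ y, A x y * (v x * v y)) ^ 2 ≤ (∑ x, ∑ y, A x y ^ 2) * (∑ x, v x ^ 2) ^ 2 := by
  have h := Finset.sum_mul_sq_le_sq_mul_sq (Finset.univ : Finset (Fin m × Fin m))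
    (fun p => A p.1 p.2) (fun p => v p.1 * v p.2)
  simp only [Fintype.sum_prod_type] at h
  refine h.trans_eq ?_
  congr 1
  rw [sq (∑ x, v x ^ 2), Finset.sum_mul_sum]
  simp only [mul_pow]

lemma signForm_cons {m : ℕ} (A : Fin (m + 1) → Fin (m + 1) → ℝ) (b : Bool) (ε : Fin m → Bool) :
    signForm A (Fin.cons b ε : Fin (m + 1) → Bool) =
      A 0 0 + signForm (fun x y => A x.succ y.succ) ε +
        boolSign b * ∑ x : Fin m, (A 0 x.succ + A x.succ 0) * boolSign (ε x) := by
  simp only [signForm, Fin.sum_univ_succ, Fin.cons_zero, Fin.cons_succ, boolSign_mul_self,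
    Finset.sum_add_distrib, add_mul, mul_add, Finset.mul_sum]
  have h1 : ∀ x : Fin m, A 0 x.succ * (boolSign b * boolSign (ε x)) =
      boolSign b * (A 0 x.succ * boolSign (ε x)) := fun x => by ring
  have h2 : ∀ x : Fin m, A x.succ 0 * (boolSign (ε x) * boolSign b) =
      boolSign b * (A x.succ 0 * boolSign (ε x)) := fun x => by ring
  simp only [h1, h2]
  ring

/-- Exponential moment of a Rademacher chaos of order two with small Frobenius norm. -/
lemma sum_exp_signForm_le : ∀ (m : ℕ) (A : Fin m → Fin m → ℝ),
    ∑ x, ∑ y, A x y ^ 2 ≤ 1 / 16 →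
    ∑ ε : Fin m → Bool, Real.exp (signForm A ε) ≤
      2 ^ m * Real.exp (∑ x, A x x + 4 * ∑ x, ∑ y, A x y ^ 2) := by
  intro m
  induction m with
  | zero => intro A _; simp [signForm]
  | succ m ih =>
    intro A hA
    set v : Fin m → ℝ := fun x => A 0 x.succ + A x.succ 0 with hv
    set A' : Fin m → Fin m → ℝ := fun x y => A x.succ y.succ with hA'
    set B : Fin m → Fin m → ℝ := fun x y => A' x y + v x * v y / 2 with hB
    set N : ℝ := ∑ x, ∑ y, A' x y ^ 2 with hN
    set V : ℝ := ∑ x, v x ^ 2 with hV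
    set ρ : ℝ := ∑ x : Fin m, (A 0 x.succ ^ 2 + A x.succ 0 ^ 2) with hρ
    set Q : ℝ := ∑ x, ∑ y, A' x y * (v x * v y) with hQ
    have hsum : ∑ x, ∑ y, A x y ^ 2 = A 0 0 ^ 2 + ρ + N := by
      simp only [Fin.sum_univ_succ, hρ, hN, hA', Finset.sum_add_distrib]
      ring
    have hN0 : 0 ≤ N := by positivity
    have hV0 : 0 ≤ V := by positivity
    have hρ0 : 0 ≤ ρ := by positivity
    have hVρ : V ≤ 2 * ρ := by
      rw [hV, hρ, Finset.mul_sum]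
      refine Finset.sum_le_sum fun x _ => ?_
      simp only [hv]
      nlinarith [sq_nonneg (A 0 x.succ - A x.succ 0)]
    have hQN : Q ^ 2 ≤ N * V ^ 2 := sq_sum_quadratic_le A' v
    have hQV : Q ≤ V / 4 := by
      refine le_of_sq_le_sq ?_ (by positivity)
      nlinarith [sq_nonneg V, sq_nonneg (A 0 0)]
    have hBsum : ∑ x, ∑ y, B x y ^ 2 = N + Q + V ^ 2 / 4 := by
      have h4 : V ^ 2 / 4 = ∑ x, ∑ y, (v x * v y) ^ 2 / 4 := by
        rw [hV, sq, Finset.sum_mul_sum, Finset.sum_div]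
        simp only [Finset.sum_div, mul_pow]
      rw [h4, hN, hQ, ← Finset.sum_add_distrib, ← Finset.sum_add_distrib]
      refine Finset.sum_congr rfl fun x _ => ?_
      rw [← Finset.sum_add_distrib, ← Finset.sum_add_distrib]
      refine Finset.sum_congr rfl fun y _ => ?_
      simp only [hB]
      ring
    have hBtr : ∑ x, B x x = ∑ x, A' x x + V / 2 := by
      simp only [hB, Finset.sum_add_distrib, hV, Finset.sum_div, sq]
    have hρ1 : ρ ≤ 1 / 16 := by nlinarith [sq_nonneg (A 0 0)]
    have hV2 : V ^ 2 ≤ ρ / 4 := by nlinarith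
    have hstep : ∀ ε : Fin m → Bool,
        Real.exp (signForm A (Fin.cons true ε : Fin (m + 1) → Bool)) +
          Real.exp (signForm A (Fin.cons false ε : Fin (m + 1) → Bool)) ≤
        2 * Real.exp (A 0 0) * Real.exp (signForm B ε) := by
      intro ε
      set L : ℝ := ∑ x, v x * boolSign (ε x) with hL
      have hBform : signForm B ε = signForm A' ε + L ^ 2 / 2 := by
        rw [hL, sq, Finset.sum_mul_sum, Finset.sum_div]
        simp only [signForm, hB, ← Finset.sum_add_distrib, Finset.sum_div]
        refine Finset.sum_congr rfl fun x _ => Finset.sum_congr rfl fun y _ => ?_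
        ring
      rw [signForm_cons, signForm_cons, hBform]
      have hc := Real.cosh_le_exp_half_sq L
      rw [Real.cosh_eq] at hc
      simp only [boolSign, if_true, Bool.false_eq_true, if_false, one_mul, neg_mul]
      change Real.exp (A 0 0 + signForm A' ε + L) + Real.exp (A 0 0 + signForm A' ε + -L) ≤ _
      simp only [Real.exp_add]
      have := mul_le_mul_of_nonneg_left hc
        (by positivity : 0 ≤ 2 * (Real.exp (A 0 0) * Real.exp (signForm A' ε)))
      linarith
    rw [← (Fin.consEquiv (fun _ : Fin (m + 1) => Bool)).sum_comp, Fintype.sum_prod_type,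
      Fintype.sum_bool, ← Finset.sum_add_distrib]
    calc _ ≤ ∑ ε : Fin m → Bool, 2 * Real.exp (A 0 0) * Real.exp (signForm B ε) :=
          Finset.sum_le_sum fun ε _ => hstep ε
      _ ≤ 2 * Real.exp (A 0 0) *
          (2 ^ m * Real.exp (∑ x, B x x + 4 * ∑ x, ∑ y, B x y ^ 2)) := by
          rw [← Finset.mul_sum]
          refine mul_le_mul_of_nonneg_left (ih B ?_) (by positivity)
          rw [hBsum]
          nlinarith [sq_nonneg (A 0 0)]
      _ = 2 ^ (m + 1) * Real.exp (A 0 0 + (∑ x, B x x + 4 * ∑ x, ∑ y, B x y ^ 2)) := by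
          rw [Real.exp_add (A 0 0)]
          ring
      _ ≤ _ := by
          refine mul_le_mul_of_nonneg_left (Real.exp_le_exp.2 ?_) (by positivity)
          rw [hBsum, hBtr, hsum, Fin.sum_univ_succ]
          change _ ≤ A 0 0 + ∑ x, A' x x + 4 * (A 0 0 ^ 2 + ρ + N)
          nlinarith [sq_nonneg (A 0 0)]

/-- A sign vector at which finitely many quadratic forms simultaneously exceed their traces by at
most `u` times their Frobenius norms. -/
lemma exists_signForm_sub_trace_le {J : Type*} [Fintype J] {m : ℕ}
    (A : J → Fin m → Fin m → ℝ) (B : J → ℝ) (hB : ∀ j, 0 ≤ B j)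
    (hA : ∀ j, ∑ x, ∑ y, A j x y ^ 2 ≤ B j ^ 2) {u : ℝ}
    (hJ : 2 * (Fintype.card J : ℝ) < Real.exp (u / 4)) :
    ∃ ε : Fin m → Bool, ∀ j, signForm (A j) ε ≤ ∑ x, A j x x + u * B j := by
  set C : J → Fin m → Fin m → ℝ := fun j x y => (4 * B j)⁻¹ * A j x y with hC
  have hform : ∀ j ε, signForm (C j) ε = (4 * B j)⁻¹ * signForm (A j) ε := fun j ε => by
    simp only [signForm, hC, Finset.mul_sum, mul_assoc]
  have htr : ∀ j, ∑ x, C j x x = (4 * B j)⁻¹ * ∑ x, A j x x := fun j => by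
    simp only [hC, Finset.mul_sum]
  have hnorm : ∀ j, ∑ x, ∑ y, C j x y ^ 2 ≤ 1 / 16 := fun j => by
    simp only [hC, mul_pow, ← Finset.mul_sum]
    rcases (hB j).eq_or_lt with h0 | h0
    · simp [← h0]
    · calc _ ≤ ((4 * B j)⁻¹) ^ 2 * B j ^ 2 := by gcongr; exact hA j
        _ = 1 / 16 := by field_simp; norm_num
  have hexp : Real.exp (1 / 4) ≤ 2 := by
    have := Real.exp_one_lt_d9
    have h4 : Real.exp (1 / 4) ^ 4 = Real.exp 1 := by rw [← Real.exp_nat_mul]; norm_num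
    by_contra! h
    nlinarith [pow_lt_pow_left₀ h (by norm_num) (n := 4) (by norm_num)]
  have hE : ∀ j, ∑ ε : Fin m → Bool, Real.exp (signForm (C j) ε - ∑ x, C j x x) ≤ 2 ^ m * 2 := by
    intro j
    have h := sum_exp_signForm_le m (C j) (hnorm j)
    simp only [Real.exp_sub, ← Finset.sum_div]
    rw [div_le_iff₀ (Real.exp_pos _)]
    refine h.trans ?_
    rw [Real.exp_add, mul_assoc, mul_comm 2]
    gcongr
    refine le_trans (Real.exp_le_exp.2 ?_) hexp
    linarith [hnorm j]
  obtain ⟨ε, -, hε⟩ : ∃ ε ∈ (Finset.univ : Finset (Fin m → Bool)),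
      ∑ j, Real.exp (signForm (C j) ε - ∑ x, C j x x) < Real.exp (u / 4) := by
    refine Finset.exists_lt_of_sum_lt ?_
    rw [Finset.sum_comm]
    calc _ ≤ ∑ _j : J, (2 : ℝ) ^ m * 2 := Finset.sum_le_sum fun j _ => hE j
      _ = 2 ^ m * (2 * Fintype.card J) := by
        rw [Finset.sum_const, Finset.card_univ, nsmul_eq_mul]; ring
      _ < 2 ^ m * Real.exp (u / 4) := by gcongr
      _ = _ := by simp
  refine ⟨ε, fun j => ?_⟩
  rcases (hB j).eq_or_lt with h0 | h0
  · have hz : ∀ x y, A j x y = 0 := fun x y => by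
      have h1 : A j x y ^ 2 ≤ ∑ x, ∑ y, A j x y ^ 2 :=
        (Finset.single_le_sum (f := fun y => A j x y ^ 2) (fun _ _ => sq_nonneg _)
          (Finset.mem_univ y)).trans
        (Finset.single_le_sum (f := fun x => ∑ y, A j x y ^ 2)
          (fun _ _ => Finset.sum_nonneg fun _ _ => sq_nonneg _) (Finset.mem_univ x))
      have h2 := hA j
      rw [← h0] at h2
      exact pow_eq_zero_iff (two_ne_zero) |>.1 (le_antisymm (by linarith) (sq_nonneg _))
    simp [signForm, hz, ← h0]
  · have h1 := (Finset.single_le_sum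
      (f := fun j => Real.exp (signForm (C j) ε - ∑ x, C j x x))
      (fun _ _ => (Real.exp_pos _).le) (Finset.mem_univ j)).trans hε.le
    have h2 := Real.exp_le_exp.1 h1
    rw [hform, htr, ← mul_sub, inv_mul_le_iff₀ (by positivity)] at h2
    linarith

lemma signForm_mul_left {m : ℕ} (c : ℝ) (A : Fin m → Fin m → ℝ) (ε : Fin m → Bool) :
    signForm (fun x y => c * A x y) ε = c * signForm A ε := by
  simp only [signForm, Finset.mul_sum, mul_assoc]

lemma norm_sq_eq_re_sq_add_im_sq (z : ℂ) : ‖z‖ ^ 2 = z.re ^ 2 + z.im ^ 2 := by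
  rw [← Complex.normSq_eq_norm_sq, Complex.normSq_apply, sq, sq]

lemma signForm_gram {m r : ℕ} (w : Fin r → Fin m → ℂ) (ε : Fin m → Bool) :
    signForm (fun x y => ∑ i, ((w i x).re * (w i y).re + (w i x).im * (w i y).im)) ε =
      ∑ i, ‖∑ x, w i x * (boolSign (ε x) : ℂ)‖ ^ 2 := by
  have h : ∀ i, ‖∑ x, w i x * (boolSign (ε x) : ℂ)‖ ^ 2 = ∑ x, ∑ y,
      ((w i x).re * (w i y).re + (w i x).im * (w i y).im) *
        (boolSign (ε x) * boolSign (ε y)) := fun i => by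
    rw [norm_sq_eq_re_sq_add_im_sq, Complex.re_sum, Complex.im_sum, sq, sq, Finset.sum_mul_sum,
      Finset.sum_mul_sum, ← Finset.sum_add_distrib]
    refine Finset.sum_congr rfl fun x _ => ?_
    rw [← Finset.sum_add_distrib]
    refine Finset.sum_congr rfl fun y _ => ?_
    simp only [Complex.re_mul_ofReal, Complex.im_mul_ofReal]
    ring
  simp only [h, signForm, Finset.sum_mul]
  rw [Finset.sum_comm (s := Finset.univ (α := Fin r))]
  exact Finset.sum_congr rfl fun x _ => Finset.sum_comm

lemma sum_sq_gram_le {m r : ℕ} (w : Fin r → Fin m → ℂ) :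
    ∑ x, ∑ y, (∑ i, ((w i x).re * (w i y).re + (w i x).im * (w i y).im)) ^ 2 ≤
      (∑ i, ∑ x, ‖w i x‖ ^ 2) ^ 2 := by
  rw [Finset.sum_comm (f := fun i x => ‖w i x‖ ^ 2), sq, Finset.sum_mul_sum]
  refine Finset.sum_le_sum fun x _ => Finset.sum_le_sum fun y _ => ?_
  refine le_trans ?_ (Finset.sum_mul_sq_le_sq_mul_sq Finset.univ (fun i => ‖w i x‖)
    (fun i => ‖w i y‖))
  refine sq_le_sq.2 (le_trans ?_ (le_abs_self _))
  refine (Finset.abs_sum_le_sum_abs _ _).trans (Finset.sum_le_sum fun i _ => ?_)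
  refine abs_le_of_sq_le_sq ?_ (by positivity)
  rw [mul_pow, norm_sq_eq_re_sq_add_im_sq, norm_sq_eq_re_sq_add_im_sq]
  nlinarith [sq_nonneg ((w i x).re * (w i y).im - (w i x).im * (w i y).re)]

lemma sq_add_sq_le_of_abs_sub_le {p q a b u F G : ℝ} (hF : 0 ≤ F) (hG : 0 ≤ G)
    (hp : |p - a| ≤ u * √F) (hq : |q - b| ≤ u * √G) :
    p ^ 2 + q ^ 2 ≤ 2 * (a ^ 2 + b ^ 2) + 2 * u ^ 2 * (F + G) := by
  have h1 : (p - a) ^ 2 ≤ u ^ 2 * F := by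
    rw [← sq_abs, ← Real.sq_sqrt hF, ← mul_pow]
    exact pow_le_pow_left₀ (abs_nonneg _) hp 2
  have h2 : (q - b) ^ 2 ≤ u ^ 2 * G := by
    rw [← sq_abs, ← Real.sq_sqrt hG, ← mul_pow]
    exact pow_le_pow_left₀ (abs_nonneg _) hq 2
  nlinarith [sq_nonneg (p - 2 * a), sq_nonneg (q - 2 * b)]

/-- A sign vector at which finitely many complex bilinear forms and finitely many systems of
complex linear forms are simultaneously under control. -/
lemma exists_sign_forms_le {P Q : Type*} [Fintype P] [Fintype Q] {m : ℕ}
    (M : P → Fin m → Fin m → ℂ) (r : Q → ℕ) (w : (q : Q) → Fin (r q) → Fin m → ℂ) {u : ℝ}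
    (hu : 2 * (4 * Fintype.card P + Fintype.card Q : ℝ) < Real.exp (u / 4)) :
    ∃ ε : Fin m → Bool,
      (∀ p, ‖∑ x, ∑ y, M p x y * (boolSign (ε x) * boolSign (ε y) : ℂ)‖ ^ 2 ≤
        2 * ‖∑ x, M p x x‖ ^ 2 + 2 * u ^ 2 * ∑ x, ∑ y, ‖M p x y‖ ^ 2) ∧
      ∀ q, ∑ i, ‖∑ x, w q i x * (boolSign (ε x) : ℂ)‖ ^ 2 ≤
        (1 + u) * ∑ i, ∑ x, ‖w q i x‖ ^ 2 := by
  let part : Bool → ℂ → ℝ := fun b z => if b then z.re else z.im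
  let A : (P × Bool × Bool) ⊕ Q → Fin m → Fin m → ℝ := Sum.elim
    (fun p x y => boolSign p.2.2 * part p.2.1 (M p.1 x y))
    (fun q x y => ∑ i, ((w q i x).re * (w q i y).re + (w q i x).im * (w q i y).im))
  let B : (P × Bool × Bool) ⊕ Q → ℝ := Sum.elim
    (fun p => √(∑ x, ∑ y, part p.2.1 (M p.1 x y) ^ 2))
    (fun q => ∑ i, ∑ x, ‖w q i x‖ ^ 2)
  obtain ⟨ε, hε⟩ := exists_signForm_sub_trace_le A B
    (by
      rintro (p | q)
      · exact Real.sqrt_nonneg _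
      · change 0 ≤ ∑ i, ∑ x, ‖w q i x‖ ^ 2
        positivity)
    (by
      rintro (p | q)
      · change ∑ x, ∑ y, (boolSign p.2.2 * part p.2.1 (M p.1 x y)) ^ 2 ≤
          √(∑ x, ∑ y, part p.2.1 (M p.1 x y) ^ 2) ^ 2
        rw [Real.sq_sqrt (by positivity)]
        simp only [mul_pow, sq (boolSign _), boolSign_mul_self, one_mul, le_refl]
      · exact sum_sq_gram_le (w q))
    (u := u)
    (by
      convert hu using 2
      simp [Fintype.card_sum, Fintype.card_prod]
      ring)
  refine ⟨ε, fun p => ?_, fun q => ?_⟩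
  · have habs : ∀ b, |signForm (fun x y => part b (M p x y)) ε - ∑ x, part b (M p x x)| ≤
        u * √(∑ x, ∑ y, part b (M p x y) ^ 2) := by
      intro b
      have h1 : signForm (fun x y => boolSign true * part b (M p x y)) ε ≤
          ∑ x, boolSign true * part b (M p x x) + u * √(∑ x, ∑ y, part b (M p x y) ^ 2) :=
        hε (Sum.inl (p, b, true))
      have h2 : signForm (fun x y => boolSign false * part b (M p x y)) ε ≤
          ∑ x, boolSign false * part b (M p x x) + u * √(∑ x, ∑ y, part b (M p x y) ^ 2) :=
        hε (Sum.inl (p, b, false))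
      rw [signForm_mul_left, ← Finset.mul_sum] at h1 h2
      simp only [boolSign, if_true, Bool.false_eq_true, if_false] at h1 h2
      rw [abs_le]
      constructor <;> linarith
    have hre := habs true
    have him := habs false
    simp only [part, if_true, Bool.false_eq_true, if_false] at hre him
    have h := sq_add_sq_le_of_abs_sub_le (by positivity) (by positivity) hre him
    have hform : ‖∑ x, ∑ y, M p x y * (boolSign (ε x) * boolSign (ε y) : ℂ)‖ ^ 2 =
        signForm (fun x y => (M p x y).re) ε ^ 2 + signForm (fun x y => (M p x y).im) ε ^ 2 := by
      simp only [norm_sq_eq_re_sq_add_im_sq, Complex.re_sum, Complex.im_sum,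
        ← Complex.ofReal_mul, Complex.re_mul_ofReal, Complex.im_mul_ofReal, signForm]
    have htr : ‖∑ x, M p x x‖ ^ 2 = (∑ x, (M p x x).re) ^ 2 + (∑ x, (M p x x).im) ^ 2 := by
      simp only [norm_sq_eq_re_sq_add_im_sq, Complex.re_sum, Complex.im_sum]
    have hfrob : ∑ x, ∑ y, ‖M p x y‖ ^ 2 =
        ∑ x, ∑ y, (M p x y).re ^ 2 + ∑ x, ∑ y, (M p x y).im ^ 2 := by
      simp only [norm_sq_eq_re_sq_add_im_sq, Finset.sum_add_distrib]
    rw [hform, htr, hfrob]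
    exact h
  · have h : signForm (fun x y => ∑ i, ((w q i x).re * (w q i y).re +
          (w q i x).im * (w q i y).im)) ε ≤
        ∑ x, ∑ i, ((w q i x).re * (w q i x).re + (w q i x).im * (w q i x).im) +
          u * ∑ i, ∑ x, ‖w q i x‖ ^ 2 := hε (Sum.inr q)
    rw [signForm_gram, Finset.sum_comm (s := Finset.univ (α := Fin m))] at h
    simp only [← Complex.normSq_apply, Complex.normSq_eq_norm_sq] at h
    linarith

section Greedy

variable {E : Type*} [NormedAddCommGroup E] [InnerProductSpace ℂ E]

open scoped InnerProductSpace

lemma sum_norm_inner_apply_sq_le [FiniteDimensional ℂ E] (L : E →ₗ[ℂ] E)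
    (hL : ∀ v, ‖L v‖ ≤ ‖v‖) {m : ℕ} {b : Fin m → E} (hb : Orthonormal ℂ b) (z : E) :
    ∑ x, ‖⟪z, L (b x)⟫_ℂ‖ ^ 2 ≤ ‖z‖ ^ 2 := by
  have hadj : ‖L.adjoint z‖ ≤ ‖z‖ := by
    have h1 : ‖L.adjoint z‖ ^ 2 ≤ ‖z‖ * ‖L.adjoint z‖ := by
      rw [← inner_self_eq_norm_sq (𝕜 := ℂ), LinearMap.adjoint_inner_left]
      exact (re_inner_le_norm _ _).trans (by gcongr; exact hL _)
    by_contra! h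
    nlinarith [norm_nonneg z]
  calc _ = ∑ x, ‖⟪b x, L.adjoint z⟫_ℂ‖ ^ 2 := by
        refine Finset.sum_congr rfl fun x _ => ?_
        rw [← LinearMap.adjoint_inner_left, norm_inner_symm]
    _ ≤ ‖L.adjoint z‖ ^ 2 := hb.sum_inner_products_le _
    _ ≤ ‖z‖ ^ 2 := by gcongr

/-- The normalized signed sum of an orthonormal family. -/
def signVector {m : ℕ} (b : Fin m → E) (ε : Fin m → Bool) : E :=
  ((√m)⁻¹ : ℂ) • ∑ x, (boolSign (ε x) : ℂ) • b x

lemma inner_signVector_right {m : ℕ} (b : Fin m → E) (ε : Fin m → Bool) (z : E) :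
    ⟪z, signVector b ε⟫_ℂ = ((√m)⁻¹ : ℂ) * ∑ x, ⟪z, b x⟫_ℂ * boolSign (ε x) := by
  simp only [signVector, inner_smul_right, inner_sum, mul_comm]

lemma map_signVector {m : ℕ} (L : E →ₗ[ℂ] E) (b : Fin m → E) (ε : Fin m → Bool) :
    L (signVector b ε) = signVector (fun x => L (b x)) ε := by
  simp only [signVector, map_smul, map_sum]

lemma inner_signVector_left {m : ℕ} (b : Fin m → E) (ε : Fin m → Bool) (z : E) :
    ⟪signVector b ε, z⟫_ℂ = ((√m)⁻¹ : ℂ) * ∑ x, ⟪b x, z⟫_ℂ * boolSign (ε x) := by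
  simp only [signVector, inner_smul_left, sum_inner, map_inv₀, Complex.conj_ofReal, mul_comm]

lemma norm_sq_inv_sqrt_mul {m : ℕ} (z : ℂ) : ‖((√m)⁻¹ : ℂ) * z‖ ^ 2 = (m : ℝ)⁻¹ * ‖z‖ ^ 2 := by
  rw [norm_mul, mul_pow, norm_inv, Complex.norm_real, inv_pow, Real.norm_eq_abs, sq_abs,
    Real.sq_sqrt (by positivity)]

lemma inner_signVector_apply {m : ℕ} (L : E →ₗ[ℂ] E) (b : Fin m → E) (ε : Fin m → Bool) :
    ⟪signVector b ε, L (signVector b ε)⟫_ℂ =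
      ((√m)⁻¹ : ℂ) * (((√m)⁻¹ : ℂ) *
        ∑ x, ∑ y, ⟪b x, L (b y)⟫_ℂ * (boolSign (ε x) * boolSign (ε y) : ℂ)) := by
  rw [inner_signVector_left, map_signVector]
  simp only [inner_signVector_right, Finset.mul_sum, Finset.sum_mul]
  refine Finset.sum_congr rfl fun x _ => Finset.sum_congr rfl fun y _ => ?_
  ring

lemma norm_signVector {m : ℕ} (hm : 0 < m) {b : Fin m → E} (hb : Orthonormal ℂ b)
    (ε : Fin m → Bool) : ‖signVector b ε‖ = 1 := by
  have h : ‖∑ x, (boolSign (ε x) : ℂ) • b x‖ ^ 2 = m := by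
    rw [← inner_self_eq_norm_sq (𝕜 := ℂ), hb.inner_sum]
    simp [← Complex.ofReal_mul, boolSign_mul_self]
  have hm' : (m : ℝ) ≠ 0 := by positivity
  rw [← sq_eq_sq₀ (norm_nonneg _) zero_le_one, signVector, norm_smul, mul_pow, h, norm_inv,
    Complex.norm_real, inv_pow, Real.norm_eq_abs, sq_abs, Real.sq_sqrt (by positivity), one_pow,
    inv_mul_cancel₀ hm']

/-- Given an orthonormal basis whose first `j` vectors have small mutual transition probabilities,
some unit vector in the span of the others can be added to them. -/
lemma exists_next_codeword [FiniteDimensional ℂ E] {ι : Type*} [Fintype ι] (r : ι → ℕ)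
    (K : (a : ι) → Fin (r a) → E →ₗ[ℂ] E)
    (hK : ∀ a v, ∑ i, ‖K a i v‖ ^ 2 = ‖v‖ ^ 2)
    {R S u η D : ℝ} {N : ℕ} (hR1 : 1 ≤ R) (hR : ∀ a, (r a : ℝ) ≤ R)
    (hS : ∀ a, ∑ i, ‖LinearMap.trace ℂ E (K a i)‖ ^ 2 ≤ S) (hu0 : 0 ≤ u)
    (hu : 2 * (Fintype.card ι * (4 * R + 2 * N)) < Real.exp (u / 4))
    (hNη : (N : ℝ) ^ 2 * η ≤ 1) (hD : 0 < D)
    (hquad : 16 * (S + 1) / D ^ 2 + 4 * u ^ 2 / D ≤ η)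
    (hlin : 2 * (1 + u) * R / D ≤ η)
    {j m : ℕ} (hj : j ≤ N) (hm : D / 2 ≤ m) (b : OrthonormalBasis (Fin j ⊕ Fin m) ℂ E)
    (hb : ∀ a s t, ∑ i, ‖⟪b (Sum.inl t), K a i (b (Sum.inl s))⟫_ℂ‖ ^ 2 ≤ η) :
    ∃ v : E, ‖v‖ = 1 ∧ (∀ t, ⟪b (Sum.inl t), v⟫_ℂ = 0) ∧
      ∀ a, (∑ i, ‖⟪v, K a i v⟫_ℂ‖ ^ 2 ≤ η) ∧
        ∀ t, ∑ i, ‖⟪v, K a i (b (Sum.inl t))⟫_ℂ‖ ^ 2 ≤ η ∧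
          ∑ i, ‖⟪b (Sum.inl t), K a i v⟫_ℂ‖ ^ 2 ≤ η := by
  set c : Fin m → E := fun x => b (Sum.inr x) with hc
  have hco : Orthonormal ℂ c := b.orthonormal.comp _ Sum.inr_injective
  have hm0 : (0 : ℝ) < m := by linarith
  have hη : 0 ≤ η := le_trans (by positivity) hlin
  have hKle : ∀ a i v, ‖K a i v‖ ≤ ‖v‖ := fun a i v => by
    refine (sq_le_sq₀ (norm_nonneg _) (norm_nonneg _)).1 ?_
    rw [← hK a v]
    exact Finset.single_le_sum (f := fun i => ‖K a i v‖ ^ 2) (fun _ _ => sq_nonneg _)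
      (Finset.mem_univ i)
  let w : (q : ι × Fin j × Bool) → Fin (r q.1) → Fin m → ℂ := fun q i x =>
    if q.2.2 then ⟪c x, K q.1 i (b (Sum.inl q.2.1))⟫_ℂ
    else ⟪b (Sum.inl q.2.1), K q.1 i (c x)⟫_ℂ
  obtain ⟨ε, hε1, hε2⟩ := exists_sign_forms_le
    (fun (p : Σ a, Fin (r a)) x y => ⟪c x, K p.1 p.2 (c y)⟫_ℂ)
    (fun q : ι × Fin j × Bool => r q.1) w (u := u) (by
      refine lt_of_le_of_lt ?_ hu
      have hj' : (j : ℝ) ≤ N := by exact_mod_cast hj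
      have hsum : ∑ a, (r a : ℝ) ≤ Fintype.card ι * R := by
        refine (Finset.sum_le_sum fun a _ => hR a).trans_eq ?_
        simp
      have hprod : (Fintype.card ι : ℝ) * j ≤ Fintype.card ι * N := by gcongr
      simp only [Fintype.card_sigma, Fintype.card_prod, Fintype.card_fin, Fintype.card_bool]
      push_cast
      linarith)
  have hmain : ∀ T : ℝ, T ≤ R → (m : ℝ)⁻¹ * ((1 + u) * T) ≤ η := fun T hT => by
    refine le_trans ?_ hlin
    rw [inv_mul_eq_div, div_le_div_iff₀ hm0 hD]
    have : (1 + u) * T ≤ (1 + u) * R := by gcongr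
    nlinarith [mul_nonneg (by linarith : 0 ≤ 1 + u) (by linarith : 0 ≤ R)]
  refine ⟨signVector c ε, norm_signVector (by exact_mod_cast hm0) hco ε, fun t => ?_,
    fun a => ⟨?_, fun t => ⟨?_, ?_⟩⟩⟩
  · rw [inner_signVector_right]
    simp [hc, b.inner_eq_ite]
  · have hfrob : ∑ i, ∑ x, ∑ y, ‖⟪c x, K a i (c y)⟫_ℂ‖ ^ 2 ≤ m := by
      calc _ ≤ ∑ i, ∑ y, ‖K a i (c y)‖ ^ 2 := by
            refine Finset.sum_le_sum fun i _ => ?_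
            rw [Finset.sum_comm]
            exact Finset.sum_le_sum fun y _ => hco.sum_inner_products_le _
        _ = ∑ y, ‖c y‖ ^ 2 := by
            rw [Finset.sum_comm]
            exact Finset.sum_congr rfl fun y _ => hK a _
        _ = m := by simp [hco.norm_eq_one]
    have htr : ∑ i, ‖∑ x, ⟪c x, K a i (c x)⟫_ℂ‖ ^ 2 ≤ 2 * (S + 1) := by
      have h1 : ∀ i, ‖∑ x, ⟪c x, K a i (c x)⟫_ℂ‖ ^ 2 ≤
          2 * ‖LinearMap.trace ℂ E (K a i)‖ ^ 2 +
            2 * (j * ∑ t, ‖⟪b (Sum.inl t), K a i (b (Sum.inl t))⟫_ℂ‖ ^ 2) := fun i => by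
        have ht := LinearMap.trace_eq_sum_inner (K a i) b
        rw [Fintype.sum_sum_type] at ht
        have hsub : ∑ x, ⟪c x, K a i (c x)⟫_ℂ = LinearMap.trace ℂ E (K a i) -
            ∑ t, ⟪b (Sum.inl t), K a i (b (Sum.inl t))⟫_ℂ := by
          rw [ht]; ring
        have hcs : ‖∑ t, ⟪b (Sum.inl t), K a i (b (Sum.inl t))⟫_ℂ‖ ^ 2 ≤
            j * ∑ t, ‖⟪b (Sum.inl t), K a i (b (Sum.inl t))⟫_ℂ‖ ^ 2 := by
          refine (pow_le_pow_left₀ (norm_nonneg _) (norm_sum_le _ _) 2).trans ?_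
          refine (sq_sum_le_card_mul_sum_sq).trans_eq (by simp)
        rw [hsub]
        have hn := pow_le_pow_left₀ (norm_nonneg _) (norm_sub_le (LinearMap.trace ℂ E (K a i))
          (∑ t, ⟪b (Sum.inl t), K a i (b (Sum.inl t))⟫_ℂ)) 2
        nlinarith [sq_nonneg (‖LinearMap.trace ℂ E (K a i)‖ -
          ‖∑ t, ⟪b (Sum.inl t), K a i (b (Sum.inl t))⟫_ℂ‖)]
      refine (Finset.sum_le_sum fun i _ => h1 i).trans ?_
      rw [Finset.sum_add_distrib, ← Finset.mul_sum, ← Finset.mul_sum, ← Finset.mul_sum,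
        Finset.sum_comm]
      have h2 : ∑ t, ∑ i, ‖⟪b (Sum.inl t), K a i (b (Sum.inl t))⟫_ℂ‖ ^ 2 ≤ j * η :=
        (Finset.sum_le_sum fun t _ => hb a t t).trans_eq (by simp)
      have h3 : (j : ℝ) * ∑ t, ∑ i, ‖⟪b (Sum.inl t), K a i (b (Sum.inl t))⟫_ℂ‖ ^ 2 ≤ 1 := by
        calc _ ≤ (j : ℝ) * (j * η) := by gcongr
          _ = (j : ℝ) ^ 2 * η := by ring
          _ ≤ (N : ℝ) ^ 2 * η := by gcongr
          _ ≤ 1 := hNη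
      linarith [hS a]
    simp only [inner_signVector_apply, norm_sq_inv_sqrt_mul, ← Finset.mul_sum]
    have hS0 : 0 ≤ S := le_trans (by positivity) (hS a)
    have hsum : ∑ i, ‖∑ x, ∑ y, ⟪c x, K a i (c y)⟫_ℂ *
        (boolSign (ε x) * boolSign (ε y) : ℂ)‖ ^ 2 ≤ 4 * (S + 1) + 2 * u ^ 2 * m := by
      refine (Finset.sum_le_sum fun i _ => hε1 ⟨a, i⟩).trans ?_
      rw [Finset.sum_add_distrib, ← Finset.mul_sum, ← Finset.mul_sum]
      have := mul_le_mul_of_nonneg_left hfrob (by positivity : 0 ≤ 2 * u ^ 2)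
      linarith
    calc _ ≤ (m : ℝ)⁻¹ * ((m : ℝ)⁻¹ * (4 * (S + 1) + 2 * u ^ 2 * m)) := by gcongr
      _ = 4 * (S + 1) / (m : ℝ) ^ 2 + 2 * u ^ 2 / m := by field_simp
      _ ≤ 4 * (S + 1) / (D / 2) ^ 2 + 2 * u ^ 2 / (D / 2) := by gcongr
      _ = 16 * (S + 1) / D ^ 2 + 4 * u ^ 2 / D := by field_simp; ring
      _ ≤ η := hquad
  · have h := hε2 (a, t, true)
    simp only [w, if_true] at h
    simp only [inner_signVector_left, norm_sq_inv_sqrt_mul, ← Finset.mul_sum]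
    refine (mul_le_mul_of_nonneg_left h (by positivity)).trans (hmain _ (le_trans ?_ hR1))
    calc _ ≤ ∑ i, ‖K a i (b (Sum.inl t))‖ ^ 2 :=
          Finset.sum_le_sum fun i _ => hco.sum_inner_products_le _
      _ = 1 := by rw [hK]; simp
  · have h := hε2 (a, t, false)
    simp only [w, Bool.false_eq_true, if_false] at h
    simp only [map_signVector, inner_signVector_right, norm_sq_inv_sqrt_mul, ← Finset.mul_sum]
    refine (mul_le_mul_of_nonneg_left h (by positivity)).trans (hmain _ (le_trans ?_ (hR a)))
    calc _ ≤ ∑ _i : Fin (r a), (1 : ℝ) := Finset.sum_le_sum fun i _ => by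
          simpa using sum_norm_inner_apply_sq_le (K a i) (hKle a i) hco (b (Sum.inl t))
      _ = r a := by simp

/-- An orthonormal family of prescribed length with small mutual transition probabilities. -/
lemma exists_orthonormal_transition_le [FiniteDimensional ℂ E] {ι : Type*} [Fintype ι]
    (r : ι → ℕ) (K : (a : ι) → Fin (r a) → E →ₗ[ℂ] E)
    (hK : ∀ a v, ∑ i, ‖K a i v‖ ^ 2 = ‖v‖ ^ 2)
    {R S u η : ℝ} {N D : ℕ} (hdim : Module.finrank ℂ E = D) (hD : 0 < D) (hND : 2 * N ≤ D)
    (hR1 : 1 ≤ R) (hR : ∀ a, (r a : ℝ) ≤ R)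
    (hS : ∀ a, ∑ i, ‖LinearMap.trace ℂ E (K a i)‖ ^ 2 ≤ S) (hu0 : 0 ≤ u)
    (hu : 2 * (Fintype.card ι * (4 * R + 2 * N)) < Real.exp (u / 4))
    (hNη : (N : ℝ) ^ 2 * η ≤ 1)
    (hquad : 16 * (S + 1) / (D : ℝ) ^ 2 + 4 * u ^ 2 / D ≤ η)
    (hlin : 2 * (1 + u) * R / D ≤ η) :
    ∀ j ≤ N, ∃ ψ : Fin j → E, Orthonormal ℂ ψ ∧
      ∀ a s t, ∑ i, ‖⟪ψ t, K a i (ψ s)⟫_ℂ‖ ^ 2 ≤ η := by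
  intro j
  induction j with
  | zero => exact fun _ => ⟨Fin.elim0, ⟨fun s => s.elim0, fun s => s.elim0⟩, fun _ s => s.elim0⟩
  | succ j ih =>
    intro hj
    obtain ⟨ψ, hψ, hψK⟩ := ih (by omega)
    have hcard : Module.finrank ℂ E = Fintype.card (Fin j ⊕ Fin (D - j)) := by
      simp only [Fintype.card_sum, Fintype.card_fin]
      omega
    have hres : Orthonormal ℂ ((Set.range (Sum.inl : Fin j → Fin j ⊕ Fin (D - j))).domRestrict
        (Sum.elim ψ fun _ => 0)) := by
      convert hψ.comp _ (Equiv.ofInjective _ (Sum.inl_injective (β := Fin (D - j)))).symm.injective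
      ext ⟨_, t, rfl⟩
      simp
    obtain ⟨b, hb⟩ := hres.exists_orthonormalBasis_extension_of_card_eq hcard
    have hbψ : ∀ t, b (Sum.inl t) = ψ t := fun t => hb _ ⟨t, rfl⟩
    have hm : (D : ℝ) / 2 ≤ ((D - j : ℕ) : ℝ) := by
      have h : D ≤ 2 * (D - j) := by omega
      have h' : (D : ℝ) ≤ 2 * ((D - j : ℕ) : ℝ) := by exact_mod_cast h
      linarith
    obtain ⟨v, hv1, hv0, hvK⟩ := exists_next_codeword r K hK hR1 hR hS hu0 hu hNη
      (by exact_mod_cast hD) hquad hlin (by omega : j ≤ N) hm b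
      (fun a s t => by simpa only [hbψ] using hψK a s t)
    simp only [hbψ] at hv0 hvK
    refine ⟨Fin.snoc ψ v, ⟨fun s => ?_, fun s t hst => ?_⟩, fun a s t => ?_⟩
    · refine Fin.lastCases ?_ (fun s => ?_) s
      · simpa using hv1
      · simpa using hψ.1 s
    · induction s using Fin.lastCases with
      | last =>
        induction t using Fin.lastCases with
        | last => exact absurd rfl hst
        | cast t => simpa using inner_eq_zero_symm.1 (hv0 t)
      | cast s =>
        induction t using Fin.lastCases with
        | last => simpa using hv0 s
        | cast t => simpa using hψ.2 (fun h => hst (by rw [h]))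
    · induction s using Fin.lastCases with
      | last =>
        induction t using Fin.lastCases with
        | last => simpa using (hvK a).1
        | cast t => simpa using ((hvK a).2 t).2
      | cast s =>
        induction t using Fin.lastCases with
        | last => simpa using ((hvK a).2 s).1
        | cast t => simpa using hψK a s t

end Greedy

open Filter in
/-- The numerical inequalities between powers of the dimension that the construction needs. -/
lemma eventually_parameters {α δ κ : ℝ} (hα : 0 ≤ α) (hαδ : 2 * α < δ) (hδ : δ < 1)
    (hκ0 : 0 < κ) (hκ : κ < δ / 2 - α) :
    ∃ β : ℝ, ∀ᶠ D : ℝ in atTop, 1 ≤ D ∧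
      2 * ((2 : ℝ) ^ (D ^ α) * (4 * D ^ (1 - δ) + 2 * D)) < Real.exp (D ^ β / 4) ∧
      16 * (2 * D ^ (-(δ / 2)) * D ^ 2 + 1) / D ^ 2 + 4 * (D ^ β) ^ 2 / D ≤ D ^ (-κ) ∧
      2 * (1 + D ^ β) * D ^ (1 - δ) / D ≤ D ^ (-κ) := by
  set θ : ℝ := δ * (1 - δ) / 2 with hθ
  have hθ0 : 0 < θ := by rw [hθ]; nlinarith
  have hθ1 : 2 * θ ≤ 1 - δ := by rw [hθ]; nlinarith
  have hθ2 : θ ≤ δ / 2 := by rw [hθ]; nlinarith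
  set σ : ℝ := δ / 2 - α - κ with hσ
  have hσ0 : 0 < σ := by linarith
  have hlog := (isLittleO_log_rpow_atTop hθ0).bound (by norm_num : (0 : ℝ) < 1 / 16)
  refine ⟨α + θ, ?_⟩
  filter_upwards [eventually_ge_atTop 1, (tendsto_rpow_atTop hσ0).eventually_ge_atTop 52,
    (tendsto_rpow_atTop hθ0).eventually_ge_atTop 192, hlog] with D hD1 hDσ hDθ hDlog
  have hD0 : 0 < D := by linarith
  have hpow : ∀ {p q : ℝ}, p ≤ q → D ^ p ≤ D ^ q := fun h => Real.rpow_le_rpow_of_exponent_le hD1 h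
  have hmain : 52 * D ^ (-κ - σ) ≤ D ^ (-κ) := by
    calc 52 * D ^ (-κ - σ) ≤ D ^ σ * D ^ (-κ - σ) := by gcongr
      _ = D ^ (-κ) := by rw [← Real.rpow_add hD0]; ring_nf
  have hX0 : 0 < D ^ (-κ - σ) := by positivity
  have hα1 : 1 ≤ D ^ α := Real.one_le_rpow hD1 hα
  refine ⟨hD1, ?_, ?_, ?_⟩
  · have h1 : (2 : ℝ) ^ (D ^ α) ≤ Real.exp (D ^ α) := by
      rw [Real.rpow_def_of_pos two_pos]
      refine Real.exp_le_exp.2 ?_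
      have := Real.log_two_lt_d9
      nlinarith
    have h2 : D ^ (1 - δ) ≤ D := by
      simpa using hpow (show 1 - δ ≤ 1 by linarith)
    have h3 : D ≤ Real.exp (D ^ θ / 16) := by
      rw [Real.norm_eq_abs, Real.norm_eq_abs, abs_of_nonneg (Real.log_nonneg hD1),
        abs_of_nonneg (by positivity)] at hDlog
      calc D = Real.exp (Real.log D) := (Real.exp_log hD0).symm
        _ ≤ _ := Real.exp_le_exp.2 (by linarith)
    have h4 : 12 < Real.exp (D ^ θ / 16) := by
      have := Real.add_one_le_exp (D ^ θ / 16)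
      linarith
    calc 2 * ((2 : ℝ) ^ (D ^ α) * (4 * D ^ (1 - δ) + 2 * D))
        ≤ 2 * (Real.exp (D ^ α) * (4 * D + 2 * D)) := by gcongr
      _ = Real.exp (D ^ α) * (12 * D) := by ring
      _ < Real.exp (D ^ α) * (Real.exp (D ^ θ / 16) * D) := by gcongr
      _ ≤ Real.exp (D ^ α) * (Real.exp (D ^ θ / 16) * Real.exp (D ^ θ / 16)) := by gcongr
      _ = Real.exp (D ^ α + D ^ θ / 8) := by rw [← Real.exp_add, ← Real.exp_add]; ring_nf
      _ ≤ Real.exp (D ^ (α + θ) / 4) := by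
        refine Real.exp_le_exp.2 ?_
        rw [Real.rpow_add hD0]
        nlinarith
  · have e1 : 16 * (2 * D ^ (-(δ / 2)) * D ^ 2 + 1) / D ^ 2 =
        32 * D ^ (-(δ / 2)) + 16 * D ^ (-2 : ℝ) := by
      rw [Real.rpow_neg hD0.le 2, Real.rpow_two]
      field_simp
      ring
    have e2 : 4 * (D ^ (α + θ)) ^ 2 / D = 4 * D ^ (2 * (α + θ) - 1) := by
      rw [Real.rpow_sub_one hD0.ne', mul_comm 2 (α + θ), Real.rpow_mul hD0.le, Real.rpow_two]
      ring
    rw [e1, e2]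
    have b1 := hpow (show -(δ / 2) ≤ -κ - σ by linarith)
    have b2 := hpow (show (-2 : ℝ) ≤ -κ - σ by linarith)
    have b3 := hpow (show 2 * (α + θ) - 1 ≤ -κ - σ by linarith)
    linarith
  · have hβ1 : 1 ≤ D ^ (α + θ) := Real.one_le_rpow hD1 (by linarith)
    have e : D ^ (α + θ) * D ^ (1 - δ) / D = D ^ (α + θ - δ) := by
      rw [← Real.rpow_add hD0, ← Real.rpow_sub_one hD0.ne']
      ring_nf
    have b := hpow (show α + θ - δ ≤ -κ - σ by linarith)
    calc 2 * (1 + D ^ (α + θ)) * D ^ (1 - δ) / D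
        ≤ 2 * (D ^ (α + θ) + D ^ (α + θ)) * D ^ (1 - δ) / D := by gcongr
      _ = 4 * (D ^ (α + θ) * D ^ (1 - δ) / D) := by ring
      _ ≤ D ^ (-κ) := by rw [e]; linarith

lemma sum_norm_toEuclideanLin_sq {I : Type*} [Fintype I] [DecidableEq I] {r : ℕ}
    (K : Fin r → Matrix I I ℂ) (hK : ∑ i, (K i)ᴴ * K i = 1) (v : EuclideanSpace ℂ I) :
    ∑ i, ‖Matrix.toEuclideanLin (K i) v‖ ^ 2 = ‖v‖ ^ 2 := by
  have h : ∀ i, ((‖Matrix.toEuclideanLin (K i) v‖ ^ 2 : ℝ) : ℂ) =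
      star v.ofLp ⬝ᵥ (((K i)ᴴ * K i) *ᵥ v.ofLp) := fun i => by
    have h1 := inner_self_eq_norm_sq_to_K (𝕜 := ℂ) (Matrix.toEuclideanLin (K i) v)
    rw [EuclideanSpace.inner_eq_star_dotProduct, Matrix.ofLp_toLpLin, Matrix.toLin'_apply,
      dotProduct_comm, Matrix.star_mulVec, ← Matrix.dotProduct_mulVec, Matrix.mulVec_mulVec] at h1
    rw [h1]
    norm_cast
  have h2 := inner_self_eq_norm_sq_to_K (𝕜 := ℂ) v
  rw [EuclideanSpace.inner_eq_star_dotProduct, dotProduct_comm] at h2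
  have : ((∑ i, ‖Matrix.toEuclideanLin (K i) v‖ ^ 2 : ℝ) : ℂ) = ((‖v‖ ^ 2 : ℝ) : ℂ) := by
    rw [Complex.ofReal_sum]
    simp only [h]
    rw [← dotProduct_sum, ← Matrix.sum_mulVec, hK, Matrix.one_mulVec, h2]
    norm_cast
  exact_mod_cast this

lemma trace_toEuclideanLin {I : Type*} [Fintype I] [DecidableEq I] (A : Matrix I I ℂ) :
    LinearMap.trace ℂ (EuclideanSpace ℂ I) (Matrix.toEuclideanLin A) = A.trace := by
  rw [LinearMap.trace_eq_sum_inner _ (EuclideanSpace.basisFun I ℂ)]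
  refine Finset.sum_congr rfl fun x _ => ?_
  simp [EuclideanSpace.inner_single_left]

/-- The matrix whose columns are the vectors of an orthonormal basis. -/
def columnMatrix {I : Type*} [Fintype I] (b : OrthonormalBasis I ℂ (EuclideanSpace ℂ I)) :
    Matrix I I ℂ := fun x y => b y x

lemma star_columnMatrix_mul_mul {I : Type*} [Fintype I] [DecidableEq I]
    (b : OrthonormalBasis I ℂ (EuclideanSpace ℂ I)) (A : Matrix I I ℂ) (x y : I) :
    (star (columnMatrix b) * A * columnMatrix b) x y =
      inner ℂ (b x) (Matrix.toEuclideanLin A (b y)) := by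
  rw [EuclideanSpace.inner_eq_star_dotProduct, Matrix.ofLp_toLpLin, Matrix.toLin'_apply,
    Matrix.mul_assoc, dotProduct_comm]
  rfl

lemma columnMatrix_mem_unitaryGroup {I : Type*} [Fintype I] [DecidableEq I]
    (b : OrthonormalBasis I ℂ (EuclideanSpace ℂ I)) :
    columnMatrix b ∈ Matrix.unitaryGroup I ℂ := by
  rw [Matrix.mem_unitaryGroup_iff']
  ext x y
  have h := star_columnMatrix_mul_mul b 1 x y
  rw [Matrix.mul_one] at h
  rw [h, Matrix.one_apply, ← b.inner_eq_ite]
  congr 1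
  ext i
  simp

/-- Main theorem: existence of quantum tamper detection codes against CPTP adversaries.
The family of CPTP maps is indexed by a finite type `ι`; the `a`-th map has Kraus operators
`K a i`, `i : Fin (r a)`.  The conclusion states that there is a unitary `U ∈ U(d)`,
`d = 2^n`, such that for every message `s` and every adversary `a`, the probability
`∑_t ⟨ψ_t, Φ_a(|ψ_s⟩⟨ψ_s|) ψ_t⟩ = ∑_t ∑_i |(U* K_i U)_{(t,0),(s,0)}|²` that the decoder
fails to output ⊥ is at most `2^{-k}`. -/
theorem tamper_detection_code (α δ γ : ℝ)
    (hα : 0 ≤ α) (hαδ : 2 * α < δ) (hδ : δ < 1) (hγ : 2 < γ * (δ / 2 - α)) :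
    ∃ k₀ : ℕ, ∀ k : ℕ, k₀ ≤ k → ∀ n : ℕ, (n : ℝ) = γ * k →
      ∀ (ι : Type) [Fintype ι] (r : ι → ℕ)
        (K : (a : ι) → Fin (r a) →
          Matrix (CodeIdx k (n - k)) (CodeIdx k (n - k)) ℂ),
        -- the family is not too large: |F| ≤ 2^{d^α}
        (Fintype.card ι : ℝ) ≤ (2 : ℝ) ^ (((2 : ℝ) ^ n) ^ α) →
        -- each map has Kraus rank at most d^{1-δ}
        (∀ a, (r a : ℝ) ≤ ((2 : ℝ) ^ n) ^ (1 - δ)) →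
        -- each adversary is a CPTP map given via Kraus operators
        (∀ a, ∑ i, (K a i)ᴴ * K a i = 1) →
        -- each map has entanglement fidelity at most 2·d^{-δ/2}
        (∀ a, (∑ i, ‖(K a i).trace‖ ^ 2) / ((2 : ℝ) ^ n) ^ 2 ≤
          2 * ((2 : ℝ) ^ n) ^ (-(δ / 2))) →
        ∃ U ∈ Matrix.unitaryGroup (CodeIdx k (n - k)) ℂ,
          ∀ (s : Fin (2 ^ k)) (a : ι),
            ∑ t : Fin (2 ^ k), ∑ i,
              ‖(star U * K a i * U) (t, anc0 (n - k)) (s, anc0 (n - k))‖ ^ 2 ≤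
              ((2 : ℝ) ^ k)⁻¹ := by
  have hgap : 0 < δ / 2 - α := by linarith
  have hγ4 : 4 < γ := by
    by_contra! h
    nlinarith
  have hκ : 2 / γ < δ / 2 - α := by
    rw [div_lt_iff₀ (by linarith)]
    linarith
  obtain ⟨β, hβ⟩ := eventually_parameters hα hαδ hδ (by positivity) hκ
  obtain ⟨D₀, hD₀⟩ := Filter.eventually_atTop.1 hβ
  refine ⟨max 1 ⌈D₀⌉₊, fun k hk n hn ι _ r K hcard hr hK htr => ?_⟩
  have hk1 : (1 : ℝ) ≤ k := by exact_mod_cast (le_max_left _ _).trans hk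
  have hkn : k + 1 ≤ n := by
    have : (k : ℝ) < n := by nlinarith
    exact_mod_cast this
  have hDD₀ : D₀ ≤ (2 : ℝ) ^ n := by
    have h1 : (k : ℝ) ≤ n := by exact_mod_cast (by omega : k ≤ n)
    have h2 : (n : ℝ) ≤ (2 : ℝ) ^ n := by exact_mod_cast Nat.lt_two_pow_self.le
    have h3 : (⌈D₀⌉₊ : ℝ) ≤ k := by exact_mod_cast (le_max_right _ _).trans hk
    linarith [Nat.le_ceil D₀]
  obtain ⟨hD1, hexp, hquad, hlin⟩ := hD₀ _ hDD₀
  set D : ℝ := (2 : ℝ) ^ n with hD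
  have hη : D ^ (-(2 / γ)) = (((2 : ℝ) ^ k) ^ 2)⁻¹ := by
    rw [hD, ← Real.rpow_natCast, ← Real.rpow_mul two_pos.le, hn, ← pow_mul, ← Real.rpow_natCast,
      ← Real.rpow_neg two_pos.le]
    congr 1
    push_cast
    field_simp
  have hND : 2 * 2 ^ k ≤ 2 ^ n := by
    rw [← pow_succ']
    exact Nat.pow_le_pow_right two_pos hkn
  have hNDr : (2 : ℝ) ^ k ≤ D := by
    have : (2 : ℝ) * 2 ^ k ≤ D := by rw [hD]; exact_mod_cast hND
    linarith [pow_pos (two_pos (α := ℝ)) k]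
  have hcardIdx : Fintype.card (CodeIdx k (n - k)) = 2 ^ n := by
    simp only [Fintype.card_prod, Fintype.card_fin, ← pow_add]
    congr 1
    omega
  have hu : 2 * (Fintype.card ι * (4 * D ^ (1 - δ) + 2 * ((2 ^ k : ℕ) : ℝ))) <
      Real.exp (D ^ β / 4) := by
    refine lt_of_le_of_lt ?_ hexp
    push_cast
    gcongr
  obtain ⟨ψ, hψ, hψK⟩ := exists_orthonormal_transition_le
    (E := EuclideanSpace ℂ (CodeIdx k (n - k))) r (fun a i => Matrix.toEuclideanLin (K a i))
    (fun a v => sum_norm_toEuclideanLin_sq (K a) (hK a) v)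
    (S := 2 * D ^ (-(δ / 2)) * D ^ 2) (η := D ^ (-(2 / γ))) (D := 2 ^ n)
    (by rw [finrank_euclideanSpace, hcardIdx]) (by positivity) hND
    (Real.one_le_rpow hD1 (by linarith)) hr
    (fun a => by
      simp only [trace_toEuclideanLin]
      exact (div_le_iff₀ (by positivity)).1 (htr a))
    (by positivity : 0 ≤ D ^ β) hu
    (by
      rw [hη]
      push_cast
      exact (mul_inv_cancel₀ (by positivity)).le)
    (by push_cast; exact hquad) (by push_cast; exact hlin) (2 ^ k) le_rfl
  have hinj : Function.Injective fun t : Fin (2 ^ k) => ((t, anc0 (n - k)) : CodeIdx k (n - k)) :=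
    fun s t h => (Prod.mk.inj h).1
  have hres : Orthonormal ℂ ((Set.range fun t : Fin (2 ^ k) =>
      ((t, anc0 (n - k)) : CodeIdx k (n - k))).domRestrict fun x => ψ x.1) := by
    refine Eq.subst (motive := fun f => Orthonormal ℂ f) (funext ?_)
      (hψ.comp _ (Equiv.ofInjective _ hinj).symm.injective)
    rintro ⟨_, t, rfl⟩
    exact congrArg ψ (Equiv.ofInjective_symm_apply hinj t)
  obtain ⟨b, hb⟩ := hres.exists_orthonormalBasis_extension_of_card_eq
    (by rw [finrank_euclideanSpace])
  have hbψ : ∀ t, b (t, anc0 (n - k)) = ψ t := fun t => hb _ ⟨t, rfl⟩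
  refine ⟨columnMatrix b, columnMatrix_mem_unitaryGroup b, fun s a => ?_⟩
  simp only [star_columnMatrix_mul_mul, hbψ]
  calc _ ≤ ∑ _t : Fin (2 ^ k), D ^ (-(2 / γ)) := Finset.sum_le_sum fun t _ => hψK a s t
    _ = ((2 : ℝ) ^ k)⁻¹ := by
      rw [hη, Finset.sum_const, Finset.card_univ, Fintype.card_fin, nsmul_eq_mul]
      push_cast
      field_simp

end
end

section
/- (Corollary: tamper detection against unitary adversaries.) Let α, γ be real constants with 0 ≤ α < 1/2 and γ·(1/2 − α) > 2. Then there exists k₀ ∈ ℕ such that for every integer k ≥ k₀ for which n := γ·k is an integer, setting d := 2^n, the following holds: for every finite family F ⊆ U(d) of d×d unitary matrices with |F| ≤ 2^{d^α} such that |Tr V| ≤ √2·d^{3/4} for every V ∈ F, there exists a unitary U ∈ U(d) such that for every s ∈ {0,1}^k and every V ∈ F, ∑_{t∈{0,1}^k} |⟨ψ_t, V ψ_s⟩|² ≤ 2^{−k}, where ψ_m := U(e_m ⊗ e_0). -/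
open Matrix

noncomputable section

theorem exists_forall_lt_of_sum_exp_le {Ω ι : Type*} [Fintype Ω] [Nonempty Ω]
    (S : Finset ι) (X : ι → Ω → ℝ) {l u B : ℝ} (hl : 0 ≤ l)
    (hX : ∀ i ∈ S, ∑ ω, Real.exp (l * X i ω) ≤ Fintype.card Ω * B)
    (hB : S.card * B < Real.exp (l * u)) :
    ∃ ω, ∀ i ∈ S, X i ω < u := by
  by_contra! h
  have hlow : ∀ ω, Real.exp (l * u) ≤ ∑ i ∈ S, Real.exp (l * X i ω) := by
    intro ω
    obtain ⟨i, hi, hu⟩ := h ω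
    calc Real.exp (l * u) ≤ Real.exp (l * X i ω) := by gcongr
      _ ≤ _ := Finset.single_le_sum (f := fun i => Real.exp (l * X i ω))
        (fun _ _ => (Real.exp_pos _).le) hi
  have hcard : (0 : ℝ) < Fintype.card Ω := by exact_mod_cast Fintype.card_pos
  have h1 : Fintype.card Ω * Real.exp (l * u) ≤ ∑ ω, ∑ i ∈ S, Real.exp (l * X i ω) := by
    simpa using Finset.sum_le_sum (s := Finset.univ) fun ω _ => hlow ω
  have h2 : ∑ ω, ∑ i ∈ S, Real.exp (l * X i ω) ≤ S.card * (Fintype.card Ω * B) := by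
    rw [Finset.sum_comm]
    simpa using Finset.sum_le_sum hX
  nlinarith [mul_lt_mul_of_pos_left hB hcard]

theorem sum_exp_sum_eq_prod {J κ : Type*} [Fintype J] [DecidableEq J] [Fintype κ]
    (g : J → κ → ℝ) :
    ∑ c : J → κ, Real.exp (∑ j, g j (c j)) = ∏ j, ∑ a, Real.exp (g j a) := by
  simp_rw [Real.exp_sum]
  rw [Finset.prod_univ_sum, Fintype.piFinset_univ]

theorem sum_exp_le_of_sum_eq_zero {κ : Type*} [Fintype κ] (Y : κ → ℝ) {l b : ℝ}
    (hl : 0 ≤ l) (hlb : l * b ≤ 1) (hY : ∀ a, |Y a| ≤ b) (h0 : ∑ a, Y a = 0) :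
    ∑ a, Real.exp (l * Y a) ≤ Fintype.card κ * Real.exp (l ^ 2 * b ^ 2) := by
  have hpt : ∀ a, Real.exp (l * Y a) ≤ 1 + l * Y a + l ^ 2 * b ^ 2 := by
    intro a
    have habs : |l * Y a| ≤ l * b := by
      rw [abs_mul, abs_of_nonneg hl]
      gcongr
      exact hY a
    have h1 := (abs_le.mp (Real.abs_exp_sub_one_sub_id_le (habs.trans hlb))).2
    have h2 : (l * Y a) ^ 2 ≤ (l * b) ^ 2 := sq_le_sq.mpr (habs.trans (le_abs_self _))
    nlinarith
  calc ∑ a, Real.exp (l * Y a) ≤ ∑ a, (1 + l * Y a + l ^ 2 * b ^ 2) :=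
        Finset.sum_le_sum fun a _ => hpt a
    _ = Fintype.card κ * (l ^ 2 * b ^ 2 + 1) := by
        simp only [Finset.sum_add_distrib, ← Finset.mul_sum, h0]
        simp
        ring
    _ ≤ _ := by
        gcongr
        exact Real.add_one_le_exp _

theorem sum_exp_mul_sum_le {J κ : Type*} [Fintype J] [DecidableEq J] [Fintype κ] (Y : J → κ → ℝ)
    {l b : ℝ} (hl : 0 ≤ l) (hlb : l * b ≤ 1) (hY : ∀ j a, |Y j a| ≤ b)
    (h0 : ∀ j, ∑ a, Y j a = 0) :
    ∑ c : J → κ, Real.exp (l * ∑ j, Y j (c j)) ≤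
      Fintype.card (J → κ) * Real.exp (l ^ 2 * b ^ 2 * Fintype.card J) := by
  simp_rw [Finset.mul_sum]
  rw [sum_exp_sum_eq_prod fun j a => l * Y j a]
  calc ∏ j, ∑ a, Real.exp (l * Y j a)
      ≤ ∏ _j : J, (Fintype.card κ * Real.exp (l ^ 2 * b ^ 2)) := by
        refine Finset.prod_le_prod (fun j _ => Finset.sum_nonneg fun a _ => (Real.exp_pos _).le) ?_
        exact fun j _ => sum_exp_le_of_sum_eq_zero _ hl hlb (hY j) (h0 j)
    _ = _ := by
        rw [Finset.prod_const, mul_pow, ← Real.exp_nat_mul, Finset.card_univ, Fintype.card_fun]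
        push_cast
        ring_nf

/-- A sign vector, read as a real vector. -/
def signVec {ι : Type*} (e : ι → ℤˣ) (i : ι) : ℝ := ((e i : ℤ) : ℝ)

theorem signVec_mul_self {ι : Type*} (e : ι → ℤˣ) (i : ι) : signVec e i * signVec e i = 1 := by
  rcases Int.units_eq_one_or (e i) with h | h <;> simp [signVec, h]

theorem signVec_mul {ι : Type*} (e f : ι → ℤˣ) (i : ι) :
    signVec (e * f) i = signVec e i * signVec f i := by
  simp [signVec]

theorem sum_exp_signVec_le {ι : Type*} [Fintype ι] [DecidableEq ι] (b : ι → ℝ) :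
    ∑ e : ι → ℤˣ, Real.exp (∑ i, signVec e i * b i) ≤
      Fintype.card (ι → ℤˣ) * Real.exp ((∑ i, b i ^ 2) / 2) := by
  have h := sum_exp_sum_eq_prod fun (i : ι) (a : ℤˣ) => ((a : ℤ) : ℝ) * b i
  simp only [signVec]
  rw [h, Finset.sum_div, Real.exp_sum]
  have hc : ((Fintype.card (ι → ℤˣ) : ℕ) : ℝ) = ∏ _i : ι, (2 : ℝ) := by
    simp [Fintype.card_units_int]
  rw [hc, ← Finset.prod_mul_distrib]
  refine Finset.prod_le_prod (fun j _ => Finset.sum_nonneg fun a _ => (Real.exp_pos _).le) ?_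
  intro i _
  have := Real.cosh_le_exp_half_sq (b i)
  rw [Real.cosh_eq] at this
  have hs : ∑ a : ℤˣ, Real.exp (((a : ℤ) : ℝ) * b i) = Real.exp (b i) + Real.exp (-b i) := by
    rw [show (Finset.univ : Finset ℤˣ) = {1, -1} from rfl, Finset.sum_pair (by decide)]
    simp
  rw [hs]
  linarith

theorem sum_exp_bilin_le {ι : Type*} [Fintype ι] [DecidableEq ι] (B : ι → ι → ℝ)
    (hB : ∀ x : ι → ℝ, ∑ i, (∑ j, B i j * x j) ^ 2 ≤ ∑ j, x j ^ 2)
    {P Q : Finset ι} (hPQ : Disjoint P Q) (l : ℝ) :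
    ∑ e : ι → ℤˣ, Real.exp (l * ∑ i ∈ P, ∑ j ∈ Q, signVec e i * signVec e j * B i j) ≤
      Fintype.card (ι → ℤˣ) * Real.exp (l ^ 2 * Q.card / 2) := by
  set X : (ι → ℤˣ) → ℝ :=
    fun e => Real.exp (l * ∑ i ∈ P, ∑ j ∈ Q, signVec e i * signVec e j * B i j) with hX
  set r : (ι → ℤˣ) → (ι → ℤˣ) := fun f i => if i ∈ P then f i else 1 with hr
  have hshift : ∀ f, ∑ e, X (e * r f) = ∑ e, X e := fun f =>
    Fintype.sum_equiv (Equiv.mulRight (r f)) _ _ fun e => rfl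
  have hcard : (0 : ℝ) < Fintype.card (ι → ℤˣ) := by exact_mod_cast Fintype.card_pos
  have hfix : ∀ e, ∑ f, X (e * r f) ≤
      Fintype.card (ι → ℤˣ) * Real.exp (l ^ 2 * Q.card / 2) := by
    intro e
    set b : ι → ℝ := fun i =>
      if i ∈ P then l * signVec e i * ∑ j ∈ Q, B i j * signVec e j else 0 with hb
    have hXb : ∀ f, X (e * r f) = Real.exp (∑ i, signVec f i * b i) := by
      intro f
      simp only [hX, hb]
      congr 1
      simp only [mul_ite, mul_zero, Finset.sum_ite_mem, Finset.univ_inter]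
      rw [Finset.mul_sum]
      refine Finset.sum_congr rfl fun i hi => ?_
      rw [Finset.mul_sum, Finset.mul_sum, Finset.mul_sum]
      refine Finset.sum_congr rfl fun j hj => ?_
      have hj' : j ∉ P := Finset.disjoint_right.mp hPQ hj
      simp only [signVec_mul]
      have h1 : signVec (r f) i = signVec f i := by simp [signVec, hr, hi]
      have h2 : signVec (r f) j = 1 := by simp [signVec, hr, hj']
      rw [h1, h2]
      ring
    simp_rw [hXb]
    refine (sum_exp_signVec_le b).trans ?_
    gcongr
    calc ∑ i, b i ^ 2 ≤ ∑ i, l ^ 2 * (∑ j ∈ Q, B i j * signVec e j) ^ 2 := by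
          refine Finset.sum_le_sum fun i _ => ?_
          simp only [hb]
          split_ifs
          · have := signVec_mul_self e i
            rw [mul_pow, mul_pow, sq (signVec e i), this, mul_one]
          · rw [zero_pow two_ne_zero]
            positivity
      _ ≤ l ^ 2 * Q.card := by
          rw [← Finset.mul_sum]
          gcongr
          have := hB fun j => if j ∈ Q then signVec e j else 0
          simpa [mul_ite, Finset.sum_ite_mem, ite_pow, sq, signVec_mul_self] using this
  have hsum : Fintype.card (ι → ℤˣ) * ∑ e, X e ≤
      Fintype.card (ι → ℤˣ) * (Fintype.card (ι → ℤˣ) * Real.exp (l ^ 2 * Q.card / 2)) := by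
    calc Fintype.card (ι → ℤˣ) * ∑ e, X e = ∑ f, ∑ e, X (e * r f) := by
          simp only [hshift]
          simp
      _ = ∑ e, ∑ f, X (e * r f) := Finset.sum_comm
      _ ≤ _ := by simpa using Finset.sum_le_sum (s := Finset.univ) fun e _ => hfix e
  exact le_of_mul_le_mul_left hsum hcard

theorem sum_selector {ι : Type*} [Fintype ι] [DecidableEq ι] {i j : ι} (hij : i ≠ j) :
    ∑ T : Finset ι, (if i ∈ T ∧ j ∉ T then (4 : ℝ) else 0) = Fintype.card (Finset ι) := by
  have hflip : ∀ (a : ι) (g : Finset ι → ℝ), ∑ T, g (symmDiff T {a}) = ∑ T, g T := fun a g =>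
    Fintype.sum_equiv (Function.Involutive.toPerm (fun T => symmDiff T {a})
      fun T => by simp) _ _ fun T => rfl
  set g : Finset ι → ℝ := fun T => if i ∈ T ∧ j ∉ T then (1 : ℝ) else 0 with hg
  have h4 : ∑ T, (g T + g (symmDiff T {i}) + (g (symmDiff T {j}) +
      g (symmDiff (symmDiff T {i}) {j}))) = ∑ T : Finset ι, (1 : ℝ) := by
    refine Finset.sum_congr rfl fun T _ => ?_
    simp only [hg, Finset.mem_symmDiff, Finset.mem_singleton, hij, hij.symm]
    by_cases h1 : i ∈ T <;> by_cases h2 : j ∈ T <;> simp [h1, h2]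
  simp only [Finset.sum_add_distrib] at h4
  rw [hflip i (fun T => g (symmDiff T {j})), hflip i g, hflip j g] at h4
  have : ∑ T : Finset ι, (if i ∈ T ∧ j ∉ T then (4 : ℝ) else 0) = 4 * ∑ T, g T := by
    rw [Finset.mul_sum]
    simp [hg]
  rw [this]
  simp only [Finset.sum_const, Finset.card_univ, nsmul_eq_mul, mul_one] at h4
  linarith

theorem exp_le_average {Ω : Type*} [Fintype Ω] [Nonempty Ω] (Y : Ω → ℝ) {y : ℝ}
    (hy : ∑ ω, Y ω = Fintype.card Ω * y) :
    Fintype.card Ω * Real.exp y ≤ ∑ ω, Real.exp (Y ω) := by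
  have hcard : (Fintype.card Ω : ℝ) ≠ 0 := by exact_mod_cast Fintype.card_ne_zero
  have h0 : ∑ ω, (Y ω - y) = 0 := by simp [Finset.sum_sub_distrib, hy]
  have hpt : ∀ ω, Real.exp y * (Y ω - y + 1) ≤ Real.exp (Y ω) := by
    intro ω
    calc Real.exp y * (Y ω - y + 1) ≤ Real.exp y * Real.exp (Y ω - y) := by
          gcongr
          exact Real.add_one_le_exp _
      _ = Real.exp (Y ω) := by rw [← Real.exp_add]; ring_nf
  calc Fintype.card Ω * Real.exp y = ∑ ω, Real.exp y * (Y ω - y + 1) := by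
        rw [← Finset.mul_sum, Finset.sum_add_distrib, h0]
        simp [mul_comm]
    _ ≤ _ := Finset.sum_le_sum fun ω _ => hpt ω

/-- Decoupling bound for an off-diagonal Rademacher chaos. -/
theorem sum_exp_chaos_le {ι : Type*} [Fintype ι] [DecidableEq ι] (B : ι → ι → ℝ)
    (hB : ∀ x : ι → ℝ, ∑ i, (∑ j, B i j * x j) ^ 2 ≤ ∑ j, x j ^ 2)
    (P : Finset ι) (l : ℝ) :
    ∑ e : ι → ℤˣ, Real.exp (l * ∑ i ∈ P, ∑ j ∈ P.erase i, signVec e i * signVec e j * B i j) ≤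
      Fintype.card (ι → ℤˣ) * Real.exp (8 * l ^ 2 * P.card) := by
  have hcard : (0 : ℝ) < Fintype.card (Finset ι) := by exact_mod_cast Fintype.card_pos
  refine le_of_mul_le_mul_left ?_ hcard
  have hsplit : ∀ (T : Finset ι) (e : ι → ℤˣ),
      (4 * l) * ∑ i ∈ P ∩ T, ∑ j ∈ P \ T, signVec e i * signVec e j * B i j =
      ∑ i ∈ P, ∑ j ∈ P.erase i, (if i ∈ T ∧ j ∉ T then (4 : ℝ) else 0) *
        (l * (signVec e i * signVec e j * B i j)) := by
    intro T e
    rw [← Finset.filter_mem_eq_inter, Finset.sum_filter, Finset.mul_sum]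
    refine Finset.sum_congr rfl fun i hi => ?_
    by_cases hT : i ∈ T
    · have hset : P \ T = (P.erase i).filter (· ∉ T) := by
        ext j
        simp only [Finset.mem_sdiff, Finset.mem_filter, Finset.mem_erase]
        constructor
        · rintro ⟨h1, h2⟩
          exact ⟨⟨fun h => h2 (h ▸ hT), h1⟩, h2⟩
        · rintro ⟨⟨_, h1⟩, h2⟩
          exact ⟨h1, h2⟩
      rw [if_pos hT, hset, Finset.sum_filter, Finset.mul_sum]
      refine Finset.sum_congr rfl fun j _ => ?_
      by_cases hj : j ∈ T
      · simp [hj]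
      · simp [hj, hT]
        ring
    · simp [hT]
  have hjensen : ∀ e : ι → ℤˣ, Fintype.card (Finset ι) *
      Real.exp (l * ∑ i ∈ P, ∑ j ∈ P.erase i, signVec e i * signVec e j * B i j) ≤
      ∑ T : Finset ι, Real.exp ((4 * l) *
        ∑ i ∈ P ∩ T, ∑ j ∈ P \ T, signVec e i * signVec e j * B i j) := by
    intro e
    refine exp_le_average _ ?_
    simp_rw [hsplit]
    rw [Finset.sum_comm, Finset.mul_sum, Finset.mul_sum]
    refine Finset.sum_congr rfl fun i _ => ?_
    rw [Finset.sum_comm, Finset.mul_sum, Finset.mul_sum]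
    refine Finset.sum_congr rfl fun j hj => ?_
    rw [← Finset.sum_mul, sum_selector (Finset.ne_of_mem_erase hj).symm]
  have hT : ∀ T : Finset ι, ∑ e : ι → ℤˣ, Real.exp ((4 * l) *
        ∑ i ∈ P ∩ T, ∑ j ∈ P \ T, signVec e i * signVec e j * B i j) ≤
      Fintype.card (ι → ℤˣ) * Real.exp (8 * l ^ 2 * P.card) := by
    intro T
    have hdisj : Disjoint (P ∩ T) (P \ T) :=
      (Finset.disjoint_sdiff_inter P T).symm
    refine (sum_exp_bilin_le B hB hdisj (4 * l)).trans ?_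
    have hle : ((P \ T).card : ℝ) ≤ P.card := by
      exact_mod_cast Finset.card_le_card Finset.sdiff_subset
    gcongr
    nlinarith [mul_le_mul_of_nonneg_left hle (sq_nonneg l)]
  calc _ = ∑ e : ι → ℤˣ, Fintype.card (Finset ι) *
      Real.exp (l * ∑ i ∈ P, ∑ j ∈ P.erase i, signVec e i * signVec e j * B i j) := by
        rw [Finset.mul_sum]
    _ ≤ _ := Finset.sum_le_sum fun e _ => hjensen e
    _ = _ := Finset.sum_comm
    _ ≤ _ := by simpa using Finset.sum_le_sum (s := Finset.univ) fun T _ => hT T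

/-- The fourth roots of unity in `ℂ`. -/
def quarterTurns : Finset ℂ := {1, -1, Complex.I, -Complex.I}

theorem card_quarterTurns_le : quarterTurns.card ≤ 4 := Finset.card_le_four

theorem norm_of_mem_quarterTurns {z : ℂ} (hz : z ∈ quarterTurns) : ‖z‖ = 1 := by
  simp only [quarterTurns, Finset.mem_insert, Finset.mem_singleton] at hz
  rcases hz with rfl | rfl | rfl | rfl <;> simp

theorem norm_le_of_quarterTurns {w : ℂ} {u : ℝ} (h : ∀ z ∈ quarterTurns, (z * w).re < u) :
    ‖w‖ ≤ 2 * u := by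
  have h1 := h 1 (by simp [quarterTurns])
  have h2 := h (-1) (by simp [quarterTurns])
  have h3 := h Complex.I (by simp [quarterTurns])
  have h4 := h (-Complex.I) (by simp [quarterTurns])
  simp at h1 h2 h3 h4
  have hre : |w.re| ≤ u := abs_le.mpr ⟨by linarith, by linarith⟩
  have him : |w.im| ≤ u := abs_le.mpr ⟨by linarith, by linarith⟩
  linarith [Complex.norm_le_abs_re_add_abs_im w]

theorem exists_shift_diag_sum_close {κ J : Type*} [Fintype κ] [AddCommGroup κ]
    [Fintype J] [DecidableEq J] (F : Finset (Matrix (κ × J) (κ × J) ℂ))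
    (hF : ∀ V ∈ F, ∀ i, ‖V i i‖ ≤ 1)
    (hcount : 4 * (Fintype.card κ : ℝ) ^ 2 * F.card <
      Real.exp (Fintype.card J / (1152 * (Fintype.card κ : ℝ) ^ 2))) :
    ∃ c : J → κ, ∀ V ∈ F, ∀ t,
      ‖∑ j, V (t + c j, j) (t + c j, j) - V.trace / Fintype.card κ‖ ≤
        Fintype.card J / (3 * Fintype.card κ) := by
  set K : ℝ := (Fintype.card κ : ℝ) with hK
  set M : ℝ := (Fintype.card J : ℝ) with hM
  have hK1 : 1 ≤ K := by
    rw [hK]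
    exact_mod_cast Fintype.card_pos (α := κ)
  have hK0 : 0 < K := by linarith
  have hM0 : 0 ≤ M := by positivity
  set μ : Matrix (κ × J) (κ × J) ℂ → J → ℂ := fun V j => (∑ a, V (a, j) (a, j)) / K with hμ
  set S := F ×ˢ (Finset.univ : Finset κ) ×ˢ quarterTurns with hS
  set Y : Matrix (κ × J) (κ × J) ℂ × κ × ℂ → J → κ → ℝ :=
    fun p j a => (p.2.2 * (p.1 (p.2.1 + a, j) (p.2.1 + a, j) - μ p.1 j)).re with hY
  have hscard : (S.card : ℝ) ≤ 4 * K ^ 2 * F.card := by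
    have h4 : (quarterTurns.card : ℝ) ≤ 4 := by exact_mod_cast card_quarterTurns_le
    rw [hS, Finset.card_product, Finset.card_product, Finset.card_univ]
    push_cast
    rw [← hK]
    have hKK : K ≤ K ^ 2 := by nlinarith
    calc (F.card : ℝ) * (K * quarterTurns.card) ≤ F.card * (K ^ 2 * 4) := by gcongr
      _ = _ := by ring
  have hμnorm : ∀ V ∈ F, ∀ j, ‖μ V j‖ ≤ 1 := by
    intro V hV j
    rw [hμ, norm_div, Complex.norm_real, Real.norm_of_nonneg hK0.le, div_le_one hK0]
    calc _ ≤ ∑ a, ‖V (a, j) (a, j)‖ := norm_sum_le _ _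
      _ ≤ ∑ _a : κ, (1 : ℝ) := Finset.sum_le_sum fun a _ => hF V hV _
      _ = K := by simp [hK]
  have hYb : ∀ p ∈ S, ∀ j a, |Y p j a| ≤ 2 := by
    rintro ⟨V, t, z⟩ hp j a
    simp only [hS, Finset.mem_product] at hp
    refine (Complex.abs_re_le_norm _).trans ?_
    rw [norm_mul, norm_of_mem_quarterTurns hp.2.2, one_mul]
    exact (norm_sub_le _ _).trans (by linarith [hF V hp.1 (t + a, j), hμnorm V hp.1 j])
  have hY0 : ∀ p ∈ S, ∀ j, ∑ a, Y p j a = 0 := by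
    rintro ⟨V, t, z⟩ _ j
    simp only [hY]
    rw [← Complex.re_sum, ← Finset.mul_sum, Finset.sum_sub_distrib,
      Fintype.sum_equiv (Equiv.addLeft t) (fun a => V (t + a, j) (t + a, j))
        (fun a => V (a, j) (a, j)) fun a => rfl]
    have : ((Fintype.card κ : ℂ)) ≠ 0 := by exact_mod_cast Fintype.card_ne_zero
    simp only [hμ, hK, Finset.sum_const, Finset.card_univ, nsmul_eq_mul, Complex.ofReal_natCast]
    rw [mul_div_cancel₀ _ this]
    simp
  have hl : 0 ≤ 1 / (48 * K) := by positivity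
  obtain ⟨c, hc⟩ := exists_forall_lt_of_sum_exp_le (Ω := J → κ) S
    (fun p c => ∑ j, Y p j (c j)) (l := 1 / (48 * K)) (u := M / (6 * K))
    (B := Real.exp ((1 / (48 * K)) ^ 2 * 2 ^ 2 * M)) hl
    (fun p hp => sum_exp_mul_sum_le (Y p) hl
      (by rw [div_mul_eq_mul_div, div_le_one (by positivity)]; linarith) (hYb p hp) (hY0 p hp))
    (by
      have hstep : (S.card : ℝ) < Real.exp (M / (576 * K ^ 2)) := by
        refine (hscard.trans_lt hcount).trans_le ?_
        gcongr
        norm_num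
      calc _ < Real.exp (M / (576 * K ^ 2)) * Real.exp ((1 / (48 * K)) ^ 2 * 2 ^ 2 * M) := by
            gcongr
        _ = _ := by
            rw [← Real.exp_add]
            congr 1
            field_simp
            ring)
  refine ⟨c, fun V hV t => ?_⟩
  have hw : ∑ j, V (t + c j, j) (t + c j, j) - V.trace / Fintype.card κ =
      ∑ j, (V (t + c j, j) (t + c j, j) - μ V j) := by
    rw [Finset.sum_sub_distrib]
    congr 1
    simp only [hμ, Matrix.trace, Matrix.diag, Fintype.sum_prod_type_right, Finset.sum_div, hK,
      Complex.ofReal_natCast]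
  rw [hw]
  refine (norm_le_of_quarterTurns (u := M / (6 * K)) fun z hz => ?_).trans (le_of_eq ?_)
  · have := hc (V, t, z) (by simp [hS, hV, hz])
    simpa only [hY, Finset.mul_sum, Complex.re_sum] using this
  · field_simp
    ring

theorem sum_norm_sq_mulVec_of_mem_unitaryGroup {ι : Type*} [Fintype ι] [DecidableEq ι]
    {A : Matrix ι ι ℂ} (hA : A ∈ Matrix.unitaryGroup ι ℂ) (x : ι → ℂ) :
    ∑ i, ‖(A *ᵥ x) i‖ ^ 2 = ∑ i, ‖x i‖ ^ 2 := by
  have hdot : ∀ y : ι → ℂ, ((∑ i, ‖y i‖ ^ 2 : ℝ) : ℂ) = star y ⬝ᵥ y := by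
    intro y
    simp only [dotProduct, Pi.star_apply, RCLike.star_def, Complex.conj_mul']
    push_cast
    rfl
  have h : ((∑ i, ‖(A *ᵥ x) i‖ ^ 2 : ℝ) : ℂ) = ((∑ i, ‖x i‖ ^ 2 : ℝ) : ℂ) := by
    rw [hdot, hdot, Matrix.star_mulVec, ← Matrix.dotProduct_mulVec, Matrix.mulVec_mulVec,
      ← Matrix.star_eq_conjTranspose, Matrix.mem_unitaryGroup_iff'.mp hA, Matrix.one_mulVec]
  exact_mod_cast h

theorem sum_sq_re_mulVec_le {ι : Type*} [Fintype ι] [DecidableEq ι]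
    {A : Matrix ι ι ℂ} (hA : A ∈ Matrix.unitaryGroup ι ℂ) {z : ℂ} (hz : ‖z‖ = 1) (x : ι → ℝ) :
    ∑ i, (∑ j, (z * A i j).re * x j) ^ 2 ≤ ∑ j, x j ^ 2 := by
  have h := sum_norm_sq_mulVec_of_mem_unitaryGroup hA fun j => (x j : ℂ)
  simp only [Complex.norm_real, Real.norm_eq_abs, sq_abs] at h
  rw [← h]
  refine Finset.sum_le_sum fun i _ => ?_
  have he : ∑ j, (z * A i j).re * x j = (z * (A *ᵥ fun j => (x j : ℂ)) i).re := by
    simp [Matrix.mulVec, dotProduct, Finset.mul_sum, ← mul_assoc]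
  rw [he]
  calc _ ≤ ‖z * (A *ᵥ fun j => (x j : ℂ)) i‖ ^ 2 := by
        rw [sq_le_sq, abs_norm]
        exact Complex.abs_re_le_norm _
    _ = _ := by rw [norm_mul, hz, one_mul]

theorem exists_sign_form_close {κ J : Type*} [Fintype κ] [DecidableEq κ] [Nonempty κ]
    [Fintype J] [DecidableEq J] (F : Finset (Matrix (κ × J) (κ × J) ℂ))
    (hF : ∀ V ∈ F, V ∈ Matrix.unitaryGroup (κ × J) ℂ)
    (hcount : 4 * (Fintype.card κ : ℝ) ^ 2 * F.card <
      Real.exp (Fintype.card J / (1152 * (Fintype.card κ : ℝ) ^ 2))) :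
    ∃ e : κ × J → ℤˣ, ∀ V ∈ F, ∀ t s,
      ‖∑ i, ∑ j, (signVec e (t, i) * signVec e (s, j) : ℂ) * V (t, i) (s, j) -
        (if t = s then ∑ i, V (t, i) (t, i) else 0)‖ ≤
        Fintype.card J / (3 * Fintype.card κ) := by
  set K : ℝ := (Fintype.card κ : ℝ) with hK
  set M : ℝ := (Fintype.card J : ℝ) with hM
  have hK0 : 0 < K := by
    rw [hK]
    exact_mod_cast Fintype.card_pos (α := κ)
  have hM0 : 0 ≤ M := by positivity
  set P : κ → Finset (κ × J) := fun t => {t} ×ˢ Finset.univ with hP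
  have hPcard : ∀ t, ((P t).card : ℝ) = M := by simp [hP, hM]
  set S := F ×ˢ (Finset.univ : Finset κ) ×ˢ (Finset.univ : Finset κ) ×ˢ quarterTurns with hS
  set X : Matrix (κ × J) (κ × J) ℂ × κ × κ × ℂ → (κ × J → ℤˣ) → ℝ :=
    fun p e => ∑ i ∈ P p.2.1, ∑ j ∈ (P p.2.2.1).erase i,
      signVec e i * signVec e j * (p.2.2.2 * p.1 i j).re with hX
  have hscard : (S.card : ℝ) ≤ 4 * K ^ 2 * F.card := by
    have h4 : (quarterTurns.card : ℝ) ≤ 4 := by exact_mod_cast card_quarterTurns_le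
    rw [hS, Finset.card_product, Finset.card_product, Finset.card_product, Finset.card_univ]
    push_cast
    rw [← hK]
    calc (F.card : ℝ) * (K * (K * quarterTurns.card)) ≤ F.card * (K * (K * 4)) := by gcongr
      _ = _ := by ring
  have hXexp : ∀ p ∈ S, ∑ e, Real.exp (1 / (96 * K) * X p e) ≤
      Fintype.card (κ × J → ℤˣ) * Real.exp (8 * (1 / (96 * K)) ^ 2 * M) := by
    rintro ⟨V, t, s, z⟩ hp
    simp only [hS, Finset.mem_product] at hp
    have hB := sum_sq_re_mulVec_le (hF V hp.1) (norm_of_mem_quarterTurns hp.2.2.2)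
    by_cases hts : t = s
    · subst hts
      have := sum_exp_chaos_le (fun i j => (z * V i j).re) hB (P t) (1 / (96 * K))
      rwa [hPcard] at this
    · have hdisj : Disjoint (P t) (P s) := by
        rw [Finset.disjoint_left]
        rintro ⟨a, i⟩ h1 h2
        simp only [hP, Finset.mem_product, Finset.mem_singleton, Finset.mem_univ, and_true] at h1 h2
        exact hts (h1.symm.trans h2)
      have h := sum_exp_bilin_le (fun i j => (z * V i j).re) hB hdisj (1 / (96 * K))
      have hXe : ∀ e, X (V, t, s, z) e = ∑ i ∈ P t, ∑ j ∈ P s,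
          signVec e i * signVec e j * (z * V i j).re := by
        intro e
        refine Finset.sum_congr rfl fun i hi => ?_
        rw [Finset.erase_eq_of_notMem (Finset.disjoint_left.mp hdisj hi)]
      simp_rw [hXe]
      refine h.trans ?_
      rw [hPcard]
      gcongr
      have : 0 ≤ (1 / (96 * K)) ^ 2 * M := by positivity
      linarith
  obtain ⟨e, he⟩ := exists_forall_lt_of_sum_exp_le S X (l := 1 / (96 * K)) (u := M / (6 * K))
    (by positivity) hXexp
    (by
      calc _ < Real.exp (M / (1152 * K ^ 2)) * Real.exp (8 * (1 / (96 * K)) ^ 2 * M) := by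
            gcongr
            exact hscard.trans_lt hcount
        _ = _ := by
            rw [← Real.exp_add]
            congr 1
            field_simp
            ring)
  refine ⟨e, fun V hV t s => ?_⟩
  have hw : ∑ i, ∑ j, (signVec e (t, i) * signVec e (s, j) : ℂ) * V (t, i) (s, j) -
        (if t = s then ∑ i, V (t, i) (t, i) else 0) =
      ∑ i ∈ P t, ∑ j ∈ (P s).erase i, (signVec e i * signVec e j : ℂ) * V i j := by
    simp only [hP, Finset.sum_product, Finset.sum_singleton]
    split_ifs with hts
    · subst hts
      rw [← Finset.sum_sub_distrib]
      refine Finset.sum_congr rfl fun i _ => ?_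
      rw [Finset.sum_erase_eq_sub (by simp), Finset.sum_product, Finset.sum_singleton]
      have : (signVec e (t, i) * signVec e (t, i) : ℂ) = 1 := by
        exact_mod_cast signVec_mul_self e (t, i)
      rw [this, one_mul]
    · rw [sub_zero]
      refine Finset.sum_congr rfl fun i _ => ?_
      rw [Finset.erase_eq_of_notMem (by simp [Ne.symm hts]), Finset.sum_product, Finset.sum_singleton]
  rw [hw]
  refine (norm_le_of_quarterTurns (u := M / (6 * K)) fun z hz => ?_).trans (le_of_eq ?_)
  · have := he (V, t, s, z) (by simp [hS, hV, hz])
    refine lt_of_eq_of_lt ?_ this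
    simp only [hX, Finset.mul_sum, Complex.re_sum]
    refine Finset.sum_congr rfl fun i _ => Finset.sum_congr rfl fun j _ => ?_
    rw [mul_left_comm, ← Complex.ofReal_mul, Complex.re_ofReal_mul]
  · field_simp
    ring

/-- The unitary whose columns `(t, j₀)` are the normalised sign vectors carried by the images
under `σ` of the blocks `{t} × J`. -/
theorem exists_unitary_of_signs {κ J : Type*} [Fintype κ] [DecidableEq κ]
    [Fintype J] [DecidableEq J] (j₀ : J) (σ : Equiv.Perm (κ × J)) (e : κ × J → ℤˣ) :
    ∃ U ∈ Matrix.unitaryGroup (κ × J) ℂ, ∀ (V : Matrix (κ × J) (κ × J) ℂ) (t s : κ),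
      (star U * V * U) (t, j₀) (s, j₀) =
        (∑ i, ∑ j, (signVec e (t, i) * signVec e (s, j) : ℂ) * V (σ (t, i)) (σ (s, j))) /
          Fintype.card J := by
  set M : ℝ := (Fintype.card J : ℝ) with hM
  have hM0 : 0 < M := by
    rw [hM]
    exact_mod_cast Fintype.card_pos_iff.mpr ⟨j₀⟩
  have hsq : ((√M : ℝ) : ℂ) * (√M : ℝ) = Fintype.card J := by
    rw [← Complex.ofReal_mul, Real.mul_self_sqrt hM0.le, hM, Complex.ofReal_natCast]
  have hMC : (Fintype.card J : ℂ) ≠ 0 := by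
    exact_mod_cast (Fintype.card_pos_iff.mpr ⟨j₀⟩).ne'
  set v : κ × J → EuclideanSpace ℂ (κ × J) := fun p => WithLp.toLp 2 fun x =>
    if (σ.symm x).1 = p.1 then ((signVec e (σ.symm x) / √M : ℝ) : ℂ) else 0 with hv
  have hform : ∀ (p : κ × J) (g : κ × J → ℂ),
      ∑ x, v p x * g x = ∑ i, ((signVec e (p.1, i) / √M : ℝ) : ℂ) * g (σ (p.1, i)) := by
    intro p g
    rw [← Equiv.sum_comp σ, Fintype.sum_prod_type, Finset.sum_eq_single p.1]
    · simp [hv]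
    · intro a _ ha
      simp [hv, ha]
    · simp
  have hstar : ∀ p x, (starRingEnd ℂ) (v p x) = v p x := by
    intro p x
    simp only [hv]
    split_ifs
    · exact Complex.conj_ofReal _
    · simp
  have horth : Orthonormal ℂ (({p | p.2 = j₀} : Set (κ × J)).domRestrict v) := by
    rw [orthonormal_iff_ite]
    rintro ⟨⟨t, i⟩, hi⟩ ⟨⟨s, j⟩, hj⟩
    simp only [Set.mem_ofPred_eq] at hi hj
    subst hi hj
    simp only [Set.domRestrict_apply, PiLp.inner_apply, RCLike.inner_apply, hstar, Subtype.mk.injEq,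
      Prod.mk.injEq, and_true]
    rw [hform]
    by_cases hts : t = s
    · subst hts
      have hone : ∀ i, ((signVec e (t, i) / √M : ℝ) : ℂ) * ((signVec e (t, i) / √M : ℝ) : ℂ) =
          1 / Fintype.card J := by
        intro i
        rw [← hsq, ← Complex.ofReal_mul, div_mul_div_comm, signVec_mul_self]
        push_cast
        rfl
      simp only [hv, Equiv.symm_apply_apply, if_true, hone]
      simp [hMC]
    · simp [hv, hts, Ne.symm hts]
  obtain ⟨b, hb⟩ := horth.exists_orthonormalBasis_extension_of_card_eq (by simp)
  set U : Matrix (κ × J) (κ × J) ℂ := Matrix.of fun x p => b p x with hU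
  refine ⟨U, ?_, fun V t s => ?_⟩
  · rw [Matrix.mem_unitaryGroup_iff']
    ext p q
    have h := orthonormal_iff_ite.mp b.orthonormal p q
    rw [PiLp.inner_apply] at h
    rw [Matrix.mul_apply, Matrix.one_apply, ← h]
    refine Finset.sum_congr rfl fun x _ => ?_
    simp [hU, Matrix.star_apply, mul_comm]
  · have hcol : ∀ r x, U x (r, j₀) = v (r, j₀) x := fun r x => by
      simp only [hU, Matrix.of_apply]
      rw [hb (r, j₀) rfl]
    have h1 : (star U * V * U) (t, j₀) (s, j₀) =
        ∑ x, v (t, j₀) x * ∑ y, v (s, j₀) y * V x y := by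
      rw [Matrix.mul_assoc, Matrix.mul_apply]
      refine Finset.sum_congr rfl fun x _ => ?_
      rw [Matrix.star_apply, hcol, RCLike.star_def, hstar, Matrix.mul_apply]
      simp only [hcol, mul_comm]
    rw [h1, hform]
    simp_rw [hform, Finset.mul_sum, Finset.sum_div]
    refine Finset.sum_congr rfl fun i _ => Finset.sum_congr rfl fun j _ => ?_
    rw [← hsq]
    push_cast
    field_simp

theorem exists_unitary_forall_norm_le {κ J : Type*} [Fintype κ] [DecidableEq κ] [AddCommGroup κ]
    [Fintype J] [DecidableEq J] (j₀ : J) (F : Finset (Matrix (κ × J) (κ × J) ℂ))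
    (hF : ∀ V ∈ F, V ∈ Matrix.unitaryGroup (κ × J) ℂ)
    (htr : ∀ V ∈ F, 3 * ‖V.trace‖ ≤ Fintype.card J)
    (hcount : 4 * (Fintype.card κ : ℝ) ^ 2 * F.card <
      Real.exp (Fintype.card J / (1152 * (Fintype.card κ : ℝ) ^ 2))) :
    ∃ U ∈ Matrix.unitaryGroup (κ × J) ℂ, ∀ V ∈ F, ∀ t s,
      ‖(star U * V * U) (t, j₀) (s, j₀)‖ ≤ (Fintype.card κ : ℝ)⁻¹ := by
  classical
  obtain ⟨c, hc⟩ := exists_shift_diag_sum_close F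
    (fun V hV i => entry_norm_bound_of_unitary (hF V hV) i i) hcount
  let σ : Equiv.Perm (κ × J) :=
    { toFun := fun p => (p.1 + c p.2, p.2)
      invFun := fun p => (p.1 - c p.2, p.2)
      left_inv := fun p => by simp
      right_inv := fun p => by simp }
  obtain ⟨e, he⟩ := exists_sign_form_close (F.image fun V => V.submatrix σ σ)
    (by
      intro A hA
      obtain ⟨V, hV, rfl⟩ := Finset.mem_image.mp hA
      rw [Matrix.mem_unitaryGroup_iff, Matrix.star_eq_conjTranspose, Matrix.conjTranspose_submatrix,
        Matrix.submatrix_mul_equiv, ← Matrix.star_eq_conjTranspose,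
        Matrix.mem_unitaryGroup_iff.mp (hF V hV), Matrix.submatrix_one_equiv])
    ((mul_le_mul_of_nonneg_left (Nat.cast_le.mpr Finset.card_image_le)
      (by positivity)).trans_lt hcount)
  obtain ⟨U, hU, hUV⟩ := exists_unitary_of_signs (κ := κ) (J := J) j₀ σ e
  refine ⟨U, hU, fun V hV t s => ?_⟩
  have hK0 : (0 : ℝ) < Fintype.card κ := by exact_mod_cast Fintype.card_pos (α := κ)
  have hM0 : (0 : ℝ) < Fintype.card J := by exact_mod_cast Fintype.card_pos_iff.mpr ⟨j₀⟩
  have h1 := he _ (Finset.mem_image_of_mem _ hV) t s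
  simp only [Matrix.submatrix_apply] at h1
  have h2 : ‖(if t = s then ∑ i, V (σ (t, i)) (σ (t, i)) else 0 : ℂ)‖ ≤
      (Fintype.card J : ℝ) / (3 * Fintype.card κ) + Fintype.card J / (3 * Fintype.card κ) := by
    split_ifs
    · have h3 := hc V hV t
      have h4 : ‖V.trace / Fintype.card κ‖ ≤ (Fintype.card J : ℝ) / (3 * Fintype.card κ) := by
        rw [norm_div, Complex.norm_natCast, div_le_div_iff₀ hK0 (by positivity)]
        nlinarith [htr V hV]
      have h5 := norm_le_norm_sub_add (∑ j, V (t + c j, j) (t + c j, j))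
        (V.trace / Fintype.card κ)
      change ‖∑ j, V (t + c j, j) (t + c j, j)‖ ≤ _
      linarith
    · rw [norm_zero]
      positivity
  rw [hUV, norm_div, Complex.norm_natCast, div_le_iff₀ hM0]
  refine (norm_le_norm_sub_add _ _).trans ((add_le_add h1 h2).trans (le_of_eq ?_))
  field_simp
  ring

theorem linear_le_two_pow {k : ℕ} (hk : 20 ≤ k) : 1152 * (3 + 2 * k) ≤ 2 ^ k := by
  induction k, hk using Nat.le_induction with
  | base => norm_num
  | succ k hk ih =>
    rw [pow_succ]
    omega

theorem count_lt_exp {α γ : ℝ} (hα0 : 0 ≤ α) (hγα : α * γ + 4 ≤ γ)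
    {k n : ℕ} (hk : 20 ≤ k) (hkn : k ≤ n) (hn : (n : ℝ) = γ * k) {N : ℝ}
    (hN : N ≤ (2 : ℝ) ^ (((2 : ℝ) ^ n) ^ α)) :
    4 * ((2 : ℝ) ^ k) ^ 2 * N < Real.exp ((2 : ℝ) ^ (n - k) / (1152 * ((2 : ℝ) ^ k) ^ 2)) := by
  set T : ℝ := ((2 : ℝ) ^ n) ^ α with hT
  have hT1 : 1 ≤ T := Real.one_le_rpow (one_le_pow₀ one_le_two) hα0
  have hlin : (1152 : ℝ) * (3 + 2 * k) ≤ 2 ^ k := by exact_mod_cast linear_le_two_pow hk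
  have hE : (2 + 2 * k + T) ≤ (2 : ℝ) ^ (n - k) / (1152 * ((2 : ℝ) ^ k) ^ 2) := by
    rw [le_div_iff₀ (by positivity)]
    have hTk : T * 2 ^ k * ((2 : ℝ) ^ k) ^ 2 ≤ 2 ^ (n - k) := by
      rw [hT]
      simp only [← Real.rpow_natCast]
      simp only [← Real.rpow_mul zero_le_two, ← Real.rpow_add zero_lt_two]
      refine Real.rpow_le_rpow_of_exponent_le one_le_two ?_
      rw [Nat.cast_sub hkn, hn]
      push_cast
      nlinarith [mul_le_mul_of_nonneg_right hγα (Nat.cast_nonneg (α := ℝ) k)]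
    refine le_trans ?_ hTk
    rw [← mul_assoc]
    refine mul_le_mul_of_nonneg_right ?_ (by positivity)
    nlinarith [mul_le_mul_of_nonneg_left hlin (zero_le_one.trans hT1),
      Nat.cast_nonneg (α := ℝ) k, mul_nonneg (sub_nonneg.mpr hT1) (Nat.cast_nonneg (α := ℝ) k)]
  have hy : (4 : ℝ) * ((2 : ℝ) ^ k) ^ 2 * (2 : ℝ) ^ T = Real.exp (Real.log 2 * (2 + 2 * k + T)) := by
    rw [← Real.rpow_def_of_pos zero_lt_two, Real.rpow_add zero_lt_two, Real.rpow_add zero_lt_two,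
      mul_comm (2 : ℝ) (k : ℝ), Real.rpow_mul zero_le_two]
    norm_num
  calc 4 * ((2 : ℝ) ^ k) ^ 2 * N ≤ 4 * ((2 : ℝ) ^ k) ^ 2 * (2 : ℝ) ^ T := by gcongr
    _ = Real.exp (Real.log 2 * (2 + 2 * k + T)) := hy
    _ < Real.exp (2 + 2 * k + T) := by
        rw [Real.exp_lt_exp]
        have hlog : Real.log 2 < 1 := by linarith [Real.log_two_lt_d9]
        have hpos : 0 < 2 + 2 * (k : ℝ) + T := by positivity
        nlinarith
    _ ≤ _ := Real.exp_le_exp.mpr hE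

theorem trace_bound_le_two_pow {γ : ℝ} {k n : ℕ} (hkn : k ≤ n) (hn : (n : ℝ) = γ * k)
    (hk : 3 ≤ (γ / 4 - 1) * k) :
    3 * (Real.sqrt 2 * ((2 : ℝ) ^ n) ^ ((3 : ℝ) / 4)) ≤ 2 ^ (n - k) := by
  have hsqrt : Real.sqrt 2 ≤ 2 := Real.sqrt_le_iff.mpr ⟨by norm_num, by norm_num⟩
  calc 3 * (Real.sqrt 2 * ((2 : ℝ) ^ n) ^ ((3 : ℝ) / 4))
      ≤ (2 : ℝ) ^ 3 * ((2 : ℝ) ^ n) ^ ((3 : ℝ) / 4) := by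
        rw [← mul_assoc]
        gcongr
        linarith
    _ ≤ 2 ^ (n - k) := by
        simp only [← Real.rpow_natCast]
        simp only [← Real.rpow_mul zero_le_two, ← Real.rpow_add zero_lt_two]
        refine Real.rpow_le_rpow_of_exponent_le one_le_two ?_
        rw [Nat.cast_sub hkn, hn]
        push_cast
        linarith

/-- Corollary: tamper detection against unitary adversaries.  For each unitary `V` in the
family, tampering by `ρ ↦ VρV*` makes the decoder fail to output ⊥ on input message `s`
with probability `∑_t |⟨ψ_t, V ψ_s⟩|² = ∑_t |(U* V U)_{(t,0),(s,0)}|²`. -/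
theorem tamper_detection_unitary (α γ : ℝ)
    (hα0 : 0 ≤ α) (hα : α < 1 / 2) (hγ : 2 < γ * (1 / 2 - α)) :
    ∃ k₀ : ℕ, ∀ k : ℕ, k₀ ≤ k → ∀ n : ℕ, (n : ℝ) = γ * k →
      ∀ F : Finset (Matrix (CodeIdx k (n - k)) (CodeIdx k (n - k)) ℂ),
        -- the family consists of unitary matrices
        (∀ V ∈ F, V ∈ Matrix.unitaryGroup (CodeIdx k (n - k)) ℂ) →
        -- the family is not too large: |F| ≤ 2^{d^α}
        (F.card : ℝ) ≤ (2 : ℝ) ^ (((2 : ℝ) ^ n) ^ α) →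
        -- trace bound: |Tr V| ≤ √2·d^{3/4}
        (∀ V ∈ F, ‖V.trace‖ ≤ Real.sqrt 2 * ((2 : ℝ) ^ n) ^ ((3 : ℝ) / 4)) →
        ∃ U ∈ Matrix.unitaryGroup (CodeIdx k (n - k)) ℂ,
          ∀ s : Fin (2 ^ k), ∀ V ∈ F,
            ∑ t : Fin (2 ^ k),
              ‖(star U * V * U) (t, anc0 (n - k)) (s, anc0 (n - k))‖ ^ 2 ≤
              ((2 : ℝ) ^ k)⁻¹ := by
  have hγ0 : 0 < γ := by
    by_contra! h
    nlinarith
  have hγ4 : 4 < γ := by nlinarith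
  obtain ⟨k₁, hk₁⟩ := exists_nat_ge (3 / (γ / 4 - 1))
  refine ⟨max 20 k₁, fun k hk n hn F hF hcard htr => ?_⟩
  have hk20 : 20 ≤ k := (le_max_left _ _).trans hk
  have hkk : (k₁ : ℝ) ≤ k := by exact_mod_cast (le_max_right _ _).trans hk
  have hkn : k ≤ n := by
    have : (k : ℝ) ≤ n := by
      rw [hn]
      nlinarith [Nat.cast_nonneg (α := ℝ) k]
    exact_mod_cast this
  have hk3 : 3 ≤ (γ / 4 - 1) * k := by
    rw [mul_comm, ← div_le_iff₀ (by linarith)]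
    exact hk₁.trans hkk
  obtain ⟨U, hU, hbound⟩ := exists_unitary_forall_norm_le (anc0 (n - k)) F hF
    (by
      intro V hV
      have h := trace_bound_le_two_pow hkn hn hk3
      simp only [Fintype.card_fin, Nat.cast_pow, Nat.cast_ofNat]
      linarith [htr V hV])
    (by
      simpa using count_lt_exp hα0 (by nlinarith) hk20 hkn hn hcard)
  refine ⟨U, hU, fun s V hV => ?_⟩
  calc _ ≤ ∑ _t : Fin (2 ^ k), (((2 : ℝ) ^ k)⁻¹) ^ 2 := by
        refine Finset.sum_le_sum fun t _ => ?_
        gcongr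
        simpa using hbound V hV t s
    _ = _ := by
        simp
        field_simp

end
end

section
/- (Higher moment bound, off-diagonal case.) There is an absolute constant C > 0 with the following property: for all integers n ≥ 1 and all dimensions d with d > √6·(2n)^{7/4}, every CPTP map Φ on M_d(ℂ) given with a Kraus representation of r operators, and all s, t ∈ {1,…,d} with s ≠ t, ∫_{U(d)} (X_{st}(U))^n dμ(U) ≤ (1 + C·n²/d) · ( r·n·(d + n)/d² )^n. -/
open MeasureTheory Matrix

noncomputable section

instance matrixMeasurableSpace {m n α : Type*} [MeasurableSpace α] :
    MeasurableSpace (Matrix m n α) :=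
  inferInstanceAs (MeasurableSpace (m → n → α))

/-- `X_{st}(U) = ∑_i |⟨e_t, U* K_i U e_s⟩|²`. -/
def Xst {d r : ℕ} (K : Fin r → Matrix (Fin d) (Fin d) ℂ) (s t : Fin d)
    (U : Matrix.unitaryGroup (Fin d) ℂ) : ℝ :=
  ∑ i, ‖(star (U : Matrix (Fin d) (Fin d) ℂ) * K i * (U : Matrix (Fin d) (Fin d) ℂ)) t s‖ ^ 2

theorem add_pow_add_sub_pow (x y : ℝ) (n : ℕ) :
    (x + y) ^ n + (x - y) ^ n =
      ∑ k ∈ Finset.range (n + 1), (1 + (-1) ^ k) * y ^ k * x ^ (n - k) * n.choose k := by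
  rw [add_comm x y, sub_eq_add_neg, add_comm x (-y), add_pow, add_pow, ← Finset.sum_add_distrib]
  refine Finset.sum_congr rfl fun k _ => ?_
  rw [neg_pow y k]
  ring

theorem add_pow_add_sub_pow_two_mul (x y : ℝ) (n : ℕ) :
    (x + y) ^ (2 * n) + (x - y) ^ (2 * n) =
      2 * ∑ k ∈ Finset.range (n + 1),
        (y ^ 2) ^ k * (x ^ 2) ^ (n - k) * (2 * n).choose (2 * k) := by
  have split (f : ℕ → ℝ) (m : ℕ) : ∑ k ∈ Finset.range (2 * m + 1), f k =
      ∑ k ∈ Finset.range (m + 1), f (2 * k) + ∑ k ∈ Finset.range m, f (2 * k + 1) := by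
    induction m with
    | zero => simp
    | succ m ih =>
      rw [show 2 * (m + 1) + 1 = 2 * m + 1 + 1 + 1 by ring, Finset.sum_range_succ,
        Finset.sum_range_succ, ih, Finset.sum_range_succ _ (m + 1), Finset.sum_range_succ _ m,
        Finset.sum_range_succ (fun k => f (2 * k + 1)) m, show 2 * (m + 1) = 2 * m + 1 + 1 by ring]
      ring
  rw [add_pow_add_sub_pow, split]
  have odd : ∑ k ∈ Finset.range n, (1 + (-1 : ℝ) ^ (2 * k + 1)) * y ^ (2 * k + 1) *
      x ^ (2 * n - (2 * k + 1)) * (2 * n).choose (2 * k + 1) = 0 := by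
    refine Finset.sum_eq_zero fun k _ => ?_
    simp [pow_succ, pow_mul]
  rw [odd, add_zero, Finset.mul_sum]
  refine Finset.sum_congr rfl fun k _ => ?_
  rw [← pow_mul, ← pow_mul, Nat.mul_sub, pow_mul (-1 : ℝ)]
  norm_num
  ring

theorem add_pow_add_sub_pow_le {p q q' : ℝ} (hp : 0 ≤ p) (hq : |q| ≤ q') (n : ℕ) :
    (p + q) ^ n + (p - q) ^ n ≤ (p + q') ^ n + (p - q') ^ n := by
  rw [add_pow_add_sub_pow, add_pow_add_sub_pow]
  refine Finset.sum_le_sum fun k _ => ?_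
  gcongr ?_ * _ * _
  rcases Nat.even_or_odd k with hk | hk
  · rw [hk.neg_one_pow, ← hk.pow_abs]
    gcongr
  · simp [hk.neg_one_pow]

section Khinchine

variable {E ι : Type*} [NormedAddCommGroup E] [InnerProductSpace ℂ E]

theorem norm_add_pow_add_norm_sub_pow_le (x y : E) (n : ℕ) :
    ‖x + y‖ ^ (2 * n) + ‖x - y‖ ^ (2 * n) ≤
      2 * ∑ k ∈ Finset.range (n + 1),
        (‖y‖ ^ 2) ^ k * (‖x‖ ^ 2) ^ (n - k) * (2 * n).choose (2 * k) := by
  rw [← add_pow_add_sub_pow_two_mul, pow_mul, pow_mul, pow_mul, pow_mul,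
    norm_add_sq (𝕜 := ℂ), norm_sub_sq (𝕜 := ℂ)]
  have h := add_pow_add_sub_pow_le (p := ‖x‖ ^ 2 + ‖y‖ ^ 2) (q := 2 * RCLike.re (inner ℂ x y))
    (q' := 2 * (‖x‖ * ‖y‖)) (by positivity)
    (by
      rw [abs_mul, abs_two]
      gcongr
      exact (RCLike.abs_re_le_norm _).trans (norm_inner_le_norm x y)) n
  convert h using 3 <;> ring

/-- The Gaussian moment constant `(2n)! / (2^n n!) = (2n - 1)‼`. -/
def gaussianMoment (n : ℕ) : ℝ := (2 * n).factorial / (2 ^ n * n.factorial)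

theorem gaussianMoment_le (n : ℕ) : gaussianMoment n ≤ (n : ℝ) ^ n := by
  rw [gaussianMoment, div_le_iff₀ (by positivity)]
  have h : ((2 * n).factorial : ℝ) ≤ ((2 * n) ^ n * n.factorial : ℕ) := by
    exact_mod_cast Nat.factorial_two_mul_le n
  push_cast [mul_pow] at h
  linarith

theorem choose_mul_gaussianMoment_le {n k : ℕ} (hk : k ≤ n) :
    ((2 * n).choose (2 * k) : ℝ) * gaussianMoment (n - k) ≤ gaussianMoment n * n.choose k := by
  have h2 : ((2 : ℝ) ^ k * k.factorial) ≤ (2 * k).factorial := by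
    exact_mod_cast Nat.two_pow_mul_factorial_le_factorial_two_mul k
  rw [Nat.cast_choose ℝ hk, Nat.cast_choose ℝ (by lia : 2 * k ≤ 2 * n), gaussianMoment,
    gaussianMoment, ← Nat.mul_sub]
  obtain ⟨l, rfl⟩ := Nat.exists_eq_add_of_le hk
  rw [Nat.add_sub_cancel_left]
  calc _ = ((2 * (k + l)).factorial : ℝ) / (2 ^ l * l.factorial) * (1 / (2 * k).factorial) := by
        field_simp
    _ ≤ ((2 * (k + l)).factorial : ℝ) / (2 ^ l * l.factorial) * (1 / (2 ^ k * k.factorial)) := by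
        gcongr
    _ = _ := by
        rw [pow_add]
        field_simp

/-- The signed sum of `b` over `A`, with sign `+` on `T` and `-` off `T`. -/
def signedSum [DecidableEq ι] (b : ι → E) (A T : Finset ι) : E :=
  ∑ j ∈ A, if j ∈ T then b j else -b j

/-- Khinchine's inequality for even moments of Rademacher sums in a Hilbert space. -/
theorem sum_norm_signedSum_pow_le [DecidableEq ι] (b : ι → E) (A : Finset ι) (n : ℕ) :
    ∑ T ∈ A.powerset, ‖signedSum b A T‖ ^ (2 * n) ≤
      2 ^ A.card * (gaussianMoment n * (∑ j ∈ A, ‖b j‖ ^ 2) ^ n) := by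
  induction A using Finset.induction_on generalizing n with
  | empty =>
    rcases n with _ | n
    · simp [gaussianMoment]
    · simp [signedSum]
  | insert a A ha ih =>
    have hplus (T : Finset ι) :
        signedSum b (insert a A) (insert a T) = signedSum b A T + b a := by
      rw [signedSum, Finset.sum_insert ha, if_pos (Finset.mem_insert_self a T), add_comm]
      congr 1
      refine Finset.sum_congr rfl fun j hj => ?_
      have : j ≠ a := fun h => ha (h ▸ hj)
      simp [this]
    have hminus {T : Finset ι} (hT : T ∈ A.powerset) :
        signedSum b (insert a A) T = signedSum b A T - b a := by
      have : a ∉ T := fun h => ha (Finset.mem_powerset.mp hT h)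
      rw [signedSum, Finset.sum_insert ha, if_neg this, sub_eq_add_neg, add_comm]
      rfl
    rw [Finset.sum_powerset_insert ha, ← Finset.sum_add_distrib]
    set w := ∑ j ∈ A, ‖b j‖ ^ 2 with hw
    calc _ ≤ ∑ T ∈ A.powerset, 2 * ∑ k ∈ Finset.range (n + 1), (‖b a‖ ^ 2) ^ k *
            (‖signedSum b A T‖ ^ 2) ^ (n - k) * (2 * n).choose (2 * k) := by
          refine Finset.sum_le_sum fun T hT => ?_
          rw [hplus T, hminus hT, add_comm]
          exact norm_add_pow_add_norm_sub_pow_le _ _ n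
      _ = 2 * ∑ k ∈ Finset.range (n + 1), (‖b a‖ ^ 2) ^ k * (2 * n).choose (2 * k) *
            ∑ T ∈ A.powerset, ‖signedSum b A T‖ ^ (2 * (n - k)) := by
          rw [← Finset.mul_sum, Finset.sum_comm]
          congr 1
          refine Finset.sum_congr rfl fun k _ => ?_
          rw [Finset.mul_sum]
          refine Finset.sum_congr rfl fun T _ => ?_
          rw [pow_mul ‖signedSum b A T‖]
          ring
      _ ≤ 2 * ∑ k ∈ Finset.range (n + 1), (‖b a‖ ^ 2) ^ k * (2 * n).choose (2 * k) *
            (2 ^ A.card * (gaussianMoment (n - k) * w ^ (n - k))) := by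
          gcongr with k _
          exact ih (n - k)
      _ = 2 ^ (A.card + 1) * ∑ k ∈ Finset.range (n + 1), (‖b a‖ ^ 2) ^ k * w ^ (n - k) *
            ((2 * n).choose (2 * k) * gaussianMoment (n - k)) := by
          rw [Finset.mul_sum, Finset.mul_sum]
          refine Finset.sum_congr rfl fun k _ => ?_
          ring
      _ ≤ 2 ^ (A.card + 1) * ∑ k ∈ Finset.range (n + 1), (‖b a‖ ^ 2) ^ k * w ^ (n - k) *
            (gaussianMoment n * n.choose k) := by
          have hw0 : 0 ≤ w := by positivity
          gcongr 2 ^ (A.card + 1) * ?_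
          refine Finset.sum_le_sum fun k hk => ?_
          gcongr ?_ * ?_
          exact choose_mul_gaussianMoment_le (Nat.lt_succ_iff.mp (Finset.mem_range.mp hk))
      _ = _ := by
          rw [Finset.card_insert_of_notMem ha, Finset.sum_insert ha, ← hw, add_pow,
            Finset.mul_sum, Finset.mul_sum, Finset.mul_sum]
          refine Finset.sum_congr rfl fun k _ => ?_
          ring

end Khinchine

/-- A left-invariant probability measure on a measurable group is right-invariant. -/
theorem isMulRightInvariant_of_isProbabilityMeasure {G : Type*} [Group G] [MeasurableSpace G]
    [MeasurableMul₂ G] [MeasurableInv G] (μ : Measure G) [IsProbabilityMeasure μ]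
    [μ.IsMulLeftInvariant] : μ.IsMulRightInvariant where
  map_mul_right_eq_self g := by
    have : IsProbabilityMeasure (μ.map (· * g)) :=
      Measure.isProbabilityMeasure_map (measurable_mul_const g).aemeasurable
    simpa using measure_eq_div_smul (μ.map (· * g)) μ (s := Set.univ) (by simp) (by simp)

section Unitary

variable {d : ℕ}

theorem measurable_matrix_entry (i j : Fin d) :
    Measurable fun A : Matrix (Fin d) (Fin d) ℂ => A i j :=
  (measurable_pi_apply j).comp (measurable_pi_apply (X := fun _ : Fin d => Fin d → ℂ) i)

theorem measurable_matrix_of_entry {α : Type*} [MeasurableSpace α]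
    {f : α → Matrix (Fin d) (Fin d) ℂ} (h : ∀ i j, Measurable fun a => f a i j) : Measurable f :=
  measurable_pi_lambda _ fun i => measurable_pi_lambda _ fun j => h i j

instance : MeasurableMul₂ (Matrix.unitaryGroup (Fin d) ℂ) where
  measurable_mul := by
    refine Measurable.subtype_mk (measurable_matrix_of_entry fun i j => ?_)
    simp only [Matrix.mul_apply]
    refine Finset.measurable_sum _ fun k _ => ?_
    exact ((measurable_matrix_entry i k).comp (measurable_subtype_coe.comp measurable_fst)).mul
      ((measurable_matrix_entry k j).comp (measurable_subtype_coe.comp measurable_snd))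

instance : MeasurableInv (Matrix.unitaryGroup (Fin d) ℂ) where
  measurable_inv := by
    refine Measurable.subtype_mk (measurable_matrix_of_entry fun i j => ?_)
    exact Complex.continuous_conj.measurable.comp
      ((measurable_matrix_entry j i).comp measurable_subtype_coe)

/-- Two orthonormal vectors are the columns `s` and `t` of some unitary matrix. -/
theorem exists_unitary_columns {s t : Fin d} (hst : s ≠ t) {x y : EuclideanSpace ℂ (Fin d)}
    (hx : ‖x‖ = 1) (hy : ‖y‖ = 1) (hxy : inner ℂ x y = 0) :
    ∃ V : Matrix.unitaryGroup (Fin d) ℂ, ∀ j,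
      (V : Matrix (Fin d) (Fin d) ℂ) j s = x j ∧ (V : Matrix (Fin d) (Fin d) ℂ) j t = y j := by
  let v : Fin d → EuclideanSpace ℂ (Fin d) := fun i => if i = s then x else y
  have hv : Orthonormal ℂ (({s, t} : Set (Fin d)).domRestrict v) := by
    refine ⟨?_, ?_⟩
    · rintro ⟨i, rfl | rfl⟩
      · simpa [Set.domRestrict_apply, v] using hx
      · simpa [Set.domRestrict_apply, v, hst.symm] using hy
    · have hyx : inner ℂ y x = 0 := inner_eq_zero_symm.mp hxy
      rintro ⟨i, rfl | rfl⟩ ⟨j, rfl | rfl⟩ hij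
      · exact absurd rfl hij
      · simpa [Set.domRestrict_apply, v, hst.symm] using hxy
      · simpa [Set.domRestrict_apply, v, hst.symm] using hyx
      · exact absurd rfl hij
  obtain ⟨b, hb⟩ := hv.exists_orthonormalBasis_extension_of_card_eq (by simp)
  refine ⟨⟨_, (EuclideanSpace.basisFun (Fin d) ℂ).toMatrix_orthonormalBasis_mem_unitary b⟩,
    fun j => ⟨?_, ?_⟩⟩
  · simp [Module.Basis.toMatrix_apply, hb s (by simp), v]
  · simp [Module.Basis.toMatrix_apply, hb t (by simp), v, hst.symm]

/-- The vector of the entries `(j, s)` of the matrices `U* K_i U`. -/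
def krausColumn {r : ℕ} (K : Fin r → Matrix (Fin d) (Fin d) ℂ) (s : Fin d)
    (U : Matrix.unitaryGroup (Fin d) ℂ) (j : Fin d) : EuclideanSpace ℂ (Fin r) :=
  WithLp.toLp 2 fun i =>
    (star (U : Matrix (Fin d) (Fin d) ℂ) * K i * (U : Matrix (Fin d) (Fin d) ℂ)) j s

theorem sum_norm_krausColumn {r : ℕ} {K : Fin r → Matrix (Fin d) (Fin d) ℂ}
    (hK : ∑ i, (K i)ᴴ * K i = 1) (s : Fin d) (U : Matrix.unitaryGroup (Fin d) ℂ) :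
    ∑ j, ‖krausColumn K s U j‖ ^ 2 = 1 := by
  set M : Matrix (Fin d) (Fin d) ℂ := U.1 with hM
  have hU : star M * M = 1 := Matrix.mem_unitaryGroup_iff'.mp U.2
  have hU' : M * star M = 1 := Matrix.mem_unitaryGroup_iff.mp U.2
  have hsum : ∑ i, (star M * K i * M)ᴴ * (star M * K i * M) = 1 := by
    have (i : Fin r) : (star M * K i * M)ᴴ * (star M * K i * M) =
        star M * ((K i)ᴴ * K i) * M := by
      rw [← Matrix.star_eq_conjTranspose, star_mul, star_mul, star_star,
        Matrix.star_eq_conjTranspose (K i)]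
      calc _ = star M * ((K i)ᴴ * (M * star M) * K i) * M := by noncomm_ring
        _ = _ := by rw [hU', mul_one]
    simp_rw [this]
    rw [← Finset.sum_mul, ← Finset.mul_sum, hK, mul_one, hU]
  have hent := congrFun (congrFun hsum s) s
  rw [Matrix.one_apply_eq, Matrix.sum_apply] at hent
  simp_rw [EuclideanSpace.norm_sq_eq, krausColumn]
  rw [Finset.sum_comm, ← Complex.ofReal_inj, Complex.ofReal_one, ← hent, Complex.ofReal_sum]
  refine Finset.sum_congr rfl fun i _ => ?_
  rw [Matrix.mul_apply, Complex.ofReal_sum]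
  refine Finset.sum_congr rfl fun j _ => ?_
  rw [Matrix.conjTranspose_apply, Complex.star_def, Complex.conj_mul', Complex.ofReal_pow]

/-- A unitary fixing `e_s` rotates `e_t` to a normalized sign vector, which turns `X_{st}` into a
Rademacher sum. -/
theorem exists_unitary_Xst_mul {s t : Fin d} (hst : s ≠ t) (T : Finset (Fin d)) :
    ∃ V : Matrix.unitaryGroup (Fin d) ℂ, ∀ (r : ℕ) (K : Fin r → Matrix (Fin d) (Fin d) ℂ)
      (U : Matrix.unitaryGroup (Fin d) ℂ),
      Xst K s t (U * V) =
        ‖signedSum (krausColumn K s U) (Finset.univ.erase s) T‖ ^ 2 / ((d : ℝ) - 1) := by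
  have hd : 2 ≤ d := by
    have := s.2
    have := t.2
    have : (s : ℕ) ≠ t := fun h => hst (Fin.ext h)
    lia
  have hd1 : (0 : ℝ) < (d : ℝ) - 1 := by
    have : (2 : ℝ) ≤ d := by exact_mod_cast hd
    linarith
  let c : ℝ := (Real.sqrt ((d : ℝ) - 1))⁻¹
  have hc : c ^ 2 = ((d : ℝ) - 1)⁻¹ := by simp [c, Real.sq_sqrt hd1.le]
  let g : EuclideanSpace ℂ (Fin d) :=
    WithLp.toLp 2 fun j => if j = s then 0 else if j ∈ T then (c : ℂ) else -(c : ℂ)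
  have hg : ‖g‖ = 1 := by
    rw [← sq_eq_sq₀ (norm_nonneg _) zero_le_one, EuclideanSpace.norm_sq_eq,
      ← Finset.add_sum_erase _ _ (Finset.mem_univ s)]
    have : ∀ j ∈ Finset.univ.erase s, ‖g j‖ ^ 2 = ((d : ℝ) - 1)⁻¹ := by
      intro j hj
      rw [← hc]
      by_cases hT : j ∈ T <;> simp [g, Finset.ne_of_mem_erase hj, hT]
    rw [Finset.sum_congr rfl this]
    simp [g, Finset.card_erase_of_mem, Nat.cast_sub (by lia : 1 ≤ d), hd1.ne']
  obtain ⟨V, hV⟩ := exists_unitary_columns hst (x := EuclideanSpace.single s 1) (y := g)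
    (by simp) hg (by simp [EuclideanSpace.inner_single_left, g])
  refine ⟨V, fun r K U => ?_⟩
  set M : Matrix (Fin d) (Fin d) ℂ := U.1 with hM
  have hentry (i : Fin r) : (star ((U * V : Matrix.unitaryGroup (Fin d) ℂ) :
      Matrix (Fin d) (Fin d) ℂ) * K i * ((U * V : Matrix.unitaryGroup (Fin d) ℂ) :
      Matrix (Fin d) (Fin d) ℂ)) t s =
      c * signedSum (krausColumn K s U) (Finset.univ.erase s) T i := by
    set W : Matrix (Fin d) (Fin d) ℂ := V.1 with hW
    have hprod : star (M * W) * K i * (M * W) = star W * (star M * K i * M * W) := by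
      rw [star_mul]
      noncomm_ring
    have hcol (j : Fin d) : (star M * K i * M * W) j s = krausColumn K s U j i := by
      rw [Matrix.mul_apply]
      simp [(hV _).1, krausColumn, ← hM]
    rw [Submonoid.coe_mul, ← hM, ← hW, hprod, Matrix.mul_apply,
      ← Finset.add_sum_erase _ _ (Finset.mem_univ s), signedSum, WithLp.ofLp_sum,
      Finset.sum_apply, Finset.mul_sum]
    rw [Matrix.star_apply, (hV s).2]
    simp only [g, if_true, star_zero, zero_mul, zero_add]
    refine Finset.sum_congr rfl fun j hj => ?_
    rw [hcol, Matrix.star_apply, (hV j).2]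
    by_cases hT : j ∈ T <;> simp [g, Finset.ne_of_mem_erase hj, hT]
  simp_rw [Xst, hentry, norm_mul, mul_pow]
  rw [← Finset.mul_sum, EuclideanSpace.norm_sq_eq, Complex.norm_real, Real.norm_eq_abs, sq_abs, hc,
    inv_mul_eq_div]

theorem integral_Xst_pow_le {r : ℕ} (n : ℕ) (μ : Measure (Matrix.unitaryGroup (Fin d) ℂ))
    [IsProbabilityMeasure μ] [μ.IsMulLeftInvariant] {K : Fin r → Matrix (Fin d) (Fin d) ℂ}
    (hK : ∑ i, (K i)ᴴ * K i = 1) {s t : Fin d} (hst : s ≠ t) :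
    ∫ U, Xst K s t U ^ n ∂μ ≤ ((n : ℝ) / ((d : ℝ) - 1)) ^ n := by
  have := isMulRightInvariant_of_isProbabilityMeasure μ
  have hd1 : (0 : ℝ) ≤ (d : ℝ) - 1 := by
    have : 1 ≤ d := s.pos
    have : (1 : ℝ) ≤ d := by exact_mod_cast this
    linarith
  by_cases hint : Integrable (fun U => Xst K s t U ^ n) μ
  swap
  · rw [integral_undef hint]
    positivity
  choose V hV using fun T => exists_unitary_Xst_mul (d := d) hst T
  set A := (Finset.univ : Finset (Fin d)).erase s with hA
  have hpoint (U : Matrix.unitaryGroup (Fin d) ℂ) :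
      ∑ T ∈ A.powerset, Xst K s t (U * V T) ^ n ≤
        2 ^ A.card * ((n : ℝ) / ((d : ℝ) - 1)) ^ n := by
    have hw : ∑ j ∈ A, ‖krausColumn K s U j‖ ^ 2 ≤ 1 := by
      rw [← sum_norm_krausColumn hK s U]
      exact Finset.sum_le_sum_of_subset_of_nonneg (Finset.subset_univ _)
        fun _ _ _ => by positivity
    simp_rw [hV, div_pow, ← pow_mul]
    rw [← Finset.sum_div, ← mul_div_assoc]
    gcongr
    refine (sum_norm_signedSum_pow_le _ A n).trans ?_
    gcongr
    calc _ ≤ (n : ℝ) ^ n * 1 ^ n := by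
          gcongr
          exact gaussianMoment_le n
      _ = _ := by simp
  have hsum : 2 ^ A.card * ∫ U, Xst K s t U ^ n ∂μ ≤
      2 ^ A.card * ((n : ℝ) / ((d : ℝ) - 1)) ^ n :=
    calc _ = ∑ T ∈ A.powerset, ∫ U, Xst K s t (U * V T) ^ n ∂μ := by
          simp_rw [fun T => integral_mul_right_eq_self (μ := μ) (fun U => Xst K s t U ^ n) (V T)]
          simp
      _ = ∫ U, ∑ T ∈ A.powerset, Xst K s t (U * V T) ^ n ∂μ :=
          (integral_finsetSum _ fun T _ => hint.comp_mul_right (V T)).symm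
      _ ≤ ∫ _, 2 ^ A.card * ((n : ℝ) / ((d : ℝ) - 1)) ^ n ∂μ :=
          integral_mono (integrable_finsetSum _ fun T _ => hint.comp_mul_right (V T))
            (integrable_const _) hpoint
      _ = _ := by simp
  exact le_of_mul_le_mul_left hsum (by positivity)

end Unitary

theorem div_sub_one_pow_le {n d r : ℝ} {N : ℕ} (hN : (N : ℝ) = n) (hN1 : 1 ≤ N) (hd : 2 ≤ d)
    (hr : 1 ≤ r) :
    (n / (d - 1)) ^ N ≤ (1 + 2 * n ^ 2 / d) * (r * n * (d + n) / d ^ 2) ^ N := by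
  have hn : 1 ≤ n := by rw [← hN]; exact_mod_cast hN1
  have hd1 : 0 < d - 1 := by linarith
  have hr' : (n * (d + n) / d ^ 2) ^ N ≤ (r * n * (d + n) / d ^ 2) ^ N := by
    gcongr
    nlinarith
  refine le_trans ?_ (mul_le_mul_of_nonneg_left hr' (by positivity))
  rcases hN1.eq_or_lt with rfl | hN2
  · obtain rfl : n = 1 := by simpa using hN.symm
    rw [pow_one, pow_one, show (1 + 2 * (1 : ℝ) ^ 2 / d) * (1 * (d + 1) / d ^ 2) =
      (d + 2) * (d + 1) / d ^ 3 by field_simp, div_le_div_iff₀ hd1 (by positivity)]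
    nlinarith
  · have hn2 : 2 ≤ n := by rw [← hN]; exact_mod_cast hN2
    have hbase : (n / (d - 1)) ^ N ≤ (n * (d + n) / d ^ 2) ^ N := by
      gcongr ?_ ^ N
      rw [div_le_div_iff₀ hd1 (by positivity), mul_assoc]
      gcongr
      nlinarith
    refine hbase.trans (le_mul_of_one_le_left (by positivity) ?_)
    have : 0 ≤ 2 * n ^ 2 / d := by positivity
    linarith

/-- Higher moment bound, off-diagonal case. -/
theorem higher_moment_bound_offdiag :
    ∃ C : ℝ, 0 < C ∧
      ∀ (n d r : ℕ), 1 ≤ n →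
        Real.sqrt 6 * ((2 * n : ℕ) : ℝ) ^ ((7 : ℝ) / 4) < (d : ℝ) →
        ∀ (μ : Measure (Matrix.unitaryGroup (Fin d) ℂ)),
          IsProbabilityMeasure μ → μ.IsMulLeftInvariant →
          ∀ (K : Fin r → Matrix (Fin d) (Fin d) ℂ),
            (∑ i, (K i)ᴴ * K i = 1) →
            ∀ (s t : Fin d), s ≠ t →
              ∫ U, (Xst K s t U) ^ n ∂μ ≤
                (1 + C * (n : ℝ) ^ 2 / d) *
                  ((r : ℝ) * n * ((d : ℝ) + n) / (d : ℝ) ^ 2) ^ n := by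
  refine ⟨2, two_pos, fun n d r hn _ μ _ _ K hK s t hst => ?_⟩
  have hd : (2 : ℝ) ≤ d := by
    have := s.2
    have := t.2
    have : (s : ℕ) ≠ t := fun h => hst (Fin.ext h)
    exact_mod_cast (by lia : 2 ≤ d)
  have hr : (1 : ℝ) ≤ r := by
    rcases r with _ | r
    · have h := congrFun (congrFun hK s) s
      simp at h
    · push_cast
      linarith [(Nat.cast_nonneg r : (0 : ℝ) ≤ r)]
  exact (integral_Xst_pow_le n μ hK hst).trans (div_sub_one_pow_le rfl hn hd hr)

end
end
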